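/- Let 0 < s < 1 and let the collision kernel b satisfy b(cos θ)·θ^{2+2s} → K as θ → 0+ for some K > 0. Let F₀ be a Borel probability measure on ℝ³ which is not a single Dirac mass and which has finite second moment ∫_{ℝ³} |v|² dF₀(v) < ∞, let ψ₀ be its characteristic function, and let ψ be a solution of the Fourier-transformed (Bobylev) homogeneous Boltzmann Cauchy problem with initial datum ψ₀, with t ↦ ψ(t,·) continuous into 𝒦². Then for EVERY t > 0 and every N ∈ ℕ one has ∫_{ℝ³} (1+|ξ|²)^N |ψ(t,ξ)|² dξ < ∞ (global-in-time H^∞ smoothing). -/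

import Mathlib

noncomputable section

open MeasureTheory Real Filter Metric Set
open scoped RealInnerProductSpace Topology

/-- ℝ³ as a Euclidean space. -/
abbrev E3 : Type := EuclideanSpace ℝ (Fin 3)

/-- The surface measure on the unit sphere S² ⊂ ℝ³. -/
def sphμ : Measure (sphere (0 : E3) 1) := (volume : Measure E3).toSphere

/-- The characteristic function (Fourier transform) of a Borel measure on ℝ³,
`ψ(ξ) = ∫ e^{-i v·ξ} dΨ(v)`. -/
def charFn (Ψ : Measure E3) (ξ : E3) : ℂ :=
  ∫ v, Complex.exp (-(Complex.I * (⟪v, ξ⟫ : ℂ))) ∂Ψ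

/-- `ψ` is a characteristic function of some Borel probability measure on ℝ³. -/
def IsCharFn (ψ : E3 → ℂ) : Prop :=
  ∃ Ψ : Measure E3, IsProbabilityMeasure Ψ ∧ ψ = charFn Ψ

/-- Finiteness of `‖φ - 1‖_α`, i.e. the quantitative part of membership in `𝒦^α`. -/
def KBdd (α : ℝ) (φ : E3 → ℂ) : Prop :=
  ∃ C : ℝ, ∀ ξ : E3, ξ ≠ 0 → ‖φ ξ - 1‖ ≤ C * ‖ξ‖ ^ α

/-- Membership in the space `𝒦^α`. -/
def memK (α : ℝ) (φ : E3 → ℂ) : Prop := IsCharFn φ ∧ KBdd α φ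

/-- The distance `‖φ - φ'‖_α = sup_{ξ ≠ 0} |φ(ξ) - φ'(ξ)|/|ξ|^α` on `𝒦^α`. -/
def Kdist (α : ℝ) (φ φ' : E3 → ℂ) : ℝ :=
  ⨆ ξ : {ξ : E3 // ξ ≠ 0}, ‖φ ξ.1 - φ' ξ.1‖ / ‖(ξ.1 : E3)‖ ^ α

/-- `ξ⁺ = ξ/2 + (|ξ|/2)σ`. -/
def xiPlus (ξ : E3) (σ : sphere (0 : E3) 1) : E3 := (1/2 : ℝ) • ξ + (‖ξ‖ / 2) • (σ : E3)

/-- `ξ⁻ = ξ/2 - (|ξ|/2)σ`. -/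
def xiMinus (ξ : E3) (σ : sphere (0 : E3) 1) : E3 := (1/2 : ℝ) • ξ - (‖ξ‖ / 2) • (σ : E3)

/-- The Bobylev collision integrand at time `t`, frequency `ξ`, direction `σ`. -/
def bobylevIntegrand (b : ℝ → ℝ) (ψ : ℝ → E3 → ℂ) (t : ℝ) (ξ : E3)
    (σ : sphere (0 : E3) 1) : ℂ :=
  (b (⟪ξ, (σ : E3)⟫ / ‖ξ‖) : ℂ) *
    (ψ t (xiPlus ξ σ) * ψ t (xiMinus ξ σ) - ψ t ξ)

/-- `ψ : [0,∞) × ℝ³ → ℂ` is a solution of the Fourier-transformed (Bobylev)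
homogeneous Boltzmann Cauchy problem with collision kernel `b` and initial datum `ψ₀`. -/
structure IsBobylevSolution (b : ℝ → ℝ) (ψ : ℝ → E3 → ℂ) (ψ₀ : E3 → ℂ) : Prop where
  cont : ContinuousOn (fun p : ℝ × E3 => ψ p.1 p.2) (Set.Ici 0 ×ˢ Set.univ)
  init : ψ 0 = ψ₀
  isCharFn : ∀ t ≥ 0, IsCharFn (ψ t)
  integrable : ∀ t ≥ 0, ∀ ξ : E3, Integrable (bobylevIntegrand b ψ t ξ) sphμ
  eq : ∀ t ≥ 0, ∀ ξ : E3, HasDerivWithinAt (fun τ => ψ τ ξ)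
      (∫ σ, bobylevIntegrand b ψ t ξ σ ∂sphμ) (Set.Ici 0) t

/-- Continuity of `t ↦ ψ(t,·)` from `[0,∞)` into the metric space `(𝒦^α, ‖·‖_α)`. -/
def KContinuous (α : ℝ) (ψ : ℝ → E3 → ℂ) : Prop :=
  ∀ t₀ ∈ Set.Ici (0:ℝ), Tendsto (fun t => Kdist α (ψ t) (ψ t₀)) (𝓝[Set.Ici (0:ℝ)] t₀) (𝓝 0)

/-- The angular singularity assumption `b(cos θ) θ^{2+2s} → K` as `θ → 0+`. -/
def KernelSingular (b : ℝ → ℝ) (s K : ℝ) : Prop :=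
  Tendsto (fun θ : ℝ => b (Real.cos θ) * θ ^ (2 + 2*s)) (𝓝[>] 0) (𝓝 K)

section part1

/-! ### Characteristic functions -/

lemma charFn_eq_charFun (Ψ : Measure E3) (ξ : E3) : charFn Ψ ξ = charFun Ψ (-ξ) := by
  simp only [charFn, charFun_apply]
  congr 1; ext v; congr 1
  simp [inner_neg_right]; ring

/-- `p` is a real characteristic function. -/
def PD (p : E3 → ℝ) : Prop :=
  ∃ ν : Measure E3, IsProbabilityMeasure ν ∧ ∀ ξ, charFun ν ξ = (p ξ : ℂ)

lemma charFun_symm (Ψ : Measure E3) [IsProbabilityMeasure Ψ] (ξ : E3) :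
    charFun ((Ψ.prod Ψ).map (fun z : E3 × E3 => z.1 - z.2)) ξ = ((‖charFn Ψ ξ‖ ^ 2 : ℝ) : ℂ) := by
  rw [charFun_apply, integral_map (by fun_prop) (by fun_prop)]
  have h1 : ∀ z : E3 × E3, Complex.exp (((⟪z.1 - z.2, ξ⟫ : ℝ) : ℂ) * Complex.I)
      = Complex.exp (((⟪z.1, ξ⟫ : ℝ) : ℂ) * Complex.I)
        * Complex.exp (((⟪z.2, -ξ⟫ : ℝ) : ℂ) * Complex.I) := by
    intro z
    rw [← Complex.exp_add]
    congr 1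
    rw [inner_sub_left, inner_neg_right]; push_cast; ring
  simp_rw [h1]
  rw [integral_prod_mul (μ := Ψ) (ν := Ψ)
    (fun v : E3 => Complex.exp (((⟪v, ξ⟫ : ℝ) : ℂ) * Complex.I))
    (fun v : E3 => Complex.exp (((⟪v, -ξ⟫ : ℝ) : ℂ) * Complex.I))]
  rw [← charFun_apply, ← charFun_apply, charFn_eq_charFun, charFun_neg, Complex.mul_conj,
    Complex.normSq_eq_norm_sq]
  simp

lemma pd_of_isCharFn {ψ : E3 → ℂ} (h : IsCharFn ψ) : PD (fun ξ => ‖ψ ξ‖ ^ 2) := by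
  obtain ⟨Ψ, hΨ, rfl⟩ := h
  refine ⟨(Ψ.prod Ψ).map (fun z : E3 × E3 => z.1 - z.2), ?_, fun ξ => charFun_symm Ψ ξ⟩
  exact Measure.isProbabilityMeasure_map (by fun_prop)

lemma norm_le_one_of_isCharFn {ψ : E3 → ℂ} (h : IsCharFn ψ) (ξ : E3) : ‖ψ ξ‖ ≤ 1 := by
  obtain ⟨Ψ, hΨ, rfl⟩ := h
  rw [charFn_eq_charFun]; exact norm_charFun_le_one _

lemma continuous_of_isCharFn {ψ : E3 → ℂ} (h : IsCharFn ψ) : Continuous ψ := by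
  obtain ⟨Ψ, hΨ, rfl⟩ := h
  have : charFn Ψ = fun ξ => charFun Ψ (-ξ) := by ext ξ; exact charFn_eq_charFun Ψ ξ
  rw [this]
  exact continuous_charFun.comp continuous_neg

lemma dirac_of_norm_one (Ψ : Measure E3) [IsProbabilityMeasure Ψ]
    (h : ∀ ξ, ‖charFn Ψ ξ‖ = 1) : ∃ v, Ψ {v} = 1 := by
  set ν := (Ψ.prod Ψ).map (fun z : E3 × E3 => z.1 - z.2) with hν
  have hprob : IsProbabilityMeasure ν := Measure.isProbabilityMeasure_map (by fun_prop)
  have h1 : ν = Measure.dirac 0 := by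
    apply Measure.ext_of_charFun
    ext ξ
    rw [charFun_symm, h, charFun_dirac]; simp
  have h2 : ν {0}ᶜ = 0 := by rw [h1]; simp
  rw [hν, Measure.map_apply (by fun_prop) (by measurability)] at h2
  rw [Measure.measure_prod_null (by
    exact (continuous_fst.sub continuous_snd).measurable (by measurability))] at h2
  obtain ⟨v, hv⟩ := h2.exists
  refine ⟨v, ?_⟩
  rw [prob_compl_eq_zero_iff (by measurability) |>.symm]
  have hv' : Ψ (Prod.mk v ⁻¹' ((fun z : E3 × E3 => z.1 - z.2) ⁻¹' {0}ᶜ)) = 0 := hv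
  rw [← hv']
  congr 1
  ext w
  simp [sub_eq_zero, eq_comm]

namespace PD

variable {p : E3 → ℝ}

lemma integrable_cos (ν : Measure E3) [IsProbabilityMeasure ν] (ξ : E3) :
    Integrable (fun v : E3 => Real.cos ⟪v, ξ⟫) ν := by
  refine Integrable.of_bound (C := 1) (by fun_prop) (ae_of_all _ fun v => ?_)
  rw [Real.norm_eq_abs]; exact Real.abs_cos_le_one _

lemma exists_cos (h : PD p) : ∃ ν : Measure E3, IsProbabilityMeasure ν ∧
    (∀ ξ, charFun ν ξ = (p ξ : ℂ)) ∧ ∀ ξ, p ξ = ∫ v, Real.cos ⟪v, ξ⟫ ∂ν := by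
  obtain ⟨ν, hν, h⟩ := h
  refine ⟨ν, hν, h, fun ξ => ?_⟩
  have h1 := congrArg Complex.re (h ξ)
  rw [charFun_apply, Complex.ofReal_re, ← RCLike.re_eq_complex_re, ← integral_re] at h1
  · rw [← h1]
    congr 1; ext v
    rw [RCLike.re_eq_complex_re, Complex.exp_ofReal_mul_I_re]
  · refine Integrable.of_bound (C := 1) (by fun_prop) (ae_of_all _ fun v => ?_)
    rw [Complex.norm_exp_ofReal_mul_I]

lemma one_sub (ν : Measure E3) [IsProbabilityMeasure ν] (h : ∀ ξ, p ξ = ∫ v, Real.cos ⟪v, ξ⟫ ∂ν)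
    (ξ : E3) : 1 - p ξ = ∫ v, (1 - Real.cos ⟪v, ξ⟫) ∂ν := by
  rw [integral_sub (integrable_const _) (integrable_cos ν ξ), h]; simp

lemma zero (h : PD p) : p 0 = 1 := by
  obtain ⟨ν, hν, -, h⟩ := h.exists_cos
  rw [h]; simp

lemma le_one (h : PD p) (ξ : E3) : p ξ ≤ 1 := by
  obtain ⟨ν, hν, -, h⟩ := h.exists_cos
  have := one_sub ν h ξ
  have h2 : 0 ≤ ∫ v, (1 - Real.cos ⟪v, ξ⟫) ∂ν :=
    integral_nonneg fun v => by simpa using Real.cos_le_one _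
  linarith

lemma continuous (h : PD p) : Continuous p := by
  obtain ⟨ν, hν, h⟩ := h
  have : p = fun ξ => (charFun ν ξ).re := by ext ξ; rw [h]; simp
  rw [this]
  exact Complex.continuous_re.comp continuous_charFun

lemma neg (h : PD p) (ξ : E3) : p (-ξ) = p ξ := by
  obtain ⟨ν, hν, -, h⟩ := h.exists_cos
  rw [h, h]; simp [inner_neg_right]

lemma ae_of_eq_one (ν : Measure E3) [IsProbabilityMeasure ν]
    (h : ∀ ξ, p ξ = ∫ v, Real.cos ⟪v, ξ⟫ ∂ν) {ξ : E3} (h1 : p ξ = 1) :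
    ∀ᵐ v ∂ν, Real.cos ⟪v, ξ⟫ = 1 := by
  have h2 := one_sub ν h ξ
  have hi : Integrable (fun v : E3 => 1 - Real.cos ⟪v, ξ⟫) ν :=
    (integrable_const _).sub (integrable_cos ν ξ)
  have hnn : 0 ≤ fun v : E3 => 1 - Real.cos ⟪v, ξ⟫ := fun v => by simpa using Real.cos_le_one _
  rw [h1, sub_self, eq_comm, integral_eq_zero_iff_of_nonneg hnn hi] at h2
  filter_upwards [h2] with v hv
  simp only [Pi.zero_apply] at hv
  linarith

lemma add_mem (h : PD p) {ξ η : E3} (h1 : p ξ = 1) (h2 : p η = 1) : p (ξ + η) = 1 := by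
  obtain ⟨ν, hν, -, h⟩ := h.exists_cos
  have h3 : ∀ᵐ v ∂ν, Real.cos ⟪v, ξ + η⟫ = 1 := by
    filter_upwards [ae_of_eq_one ν h h1, ae_of_eq_one ν h h2] with v hv1 hv2
    rw [inner_add_right, Real.cos_add, hv1, hv2]
    have : Real.sin ⟪v, ξ⟫ = 0 := by
      have := Real.sin_sq_add_cos_sq ⟪v, ξ⟫
      rw [hv1] at this
      nlinarith
    rw [this]; ring
  rw [h, integral_congr_ae h3]; simp

lemma sub_mem (h : PD p) {ξ η : E3} (h1 : p ξ = 1) (h2 : p η = 1) : p (ξ - η) = 1 := by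
  rw [sub_eq_add_neg]; exact h.add_mem h1 (by rw [h.neg, h2])

lemma doubling (h : PD p) (ξ : E3) : 1 - p ((2:ℝ) • ξ) ≤ 4 * (1 - p ξ) := by
  obtain ⟨ν, hν, -, h⟩ := h.exists_cos
  rw [one_sub ν h, one_sub ν h, ← integral_const_mul]
  refine integral_mono ((integrable_const _).sub (integrable_cos ν _))
    (((integrable_const _).sub (integrable_cos ν _)).const_mul 4) fun v => ?_
  simp only [inner_smul_right, Real.cos_two_mul]
  nlinarith [Real.cos_le_one ⟪v, ξ⟫, sq_nonneg (1 - Real.cos ⟪v, ξ⟫)]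

lemma one_sub_cos_div (z h : ℝ) (hh : h ≠ 0) :
    (1 - Real.cos (h * z)) / h ^ 2 = z ^ 2 / 2 * Real.sinc (h * z / 2) ^ 2 := by
  have h1 : Real.sin (h * z / 2) = (h * z / 2) * Real.sinc (h * z / 2) := by
    by_cases h0 : h * z / 2 = 0
    · rw [h0]; simp
    · rw [Real.sinc_of_ne_zero h0, mul_div_cancel₀ _ h0]
  have h2 : Real.cos (h * z) = 1 - 2 * Real.sin (h * z / 2) ^ 2 := by
    have := Real.cos_two_mul (h * z / 2)
    have h3 := Real.sin_sq_add_cos_sq (h * z / 2)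
    rw [show 2 * (h * z / 2) = h * z by ring] at this
    linarith
  rw [h2, h1]; field_simp; ring

lemma tendsto_one_sub_cos (z : ℝ) :
    Tendsto (fun h : ℝ => (1 - Real.cos (h * z)) / h ^ 2) (𝓝[>] 0) (𝓝 (z ^ 2 / 2)) := by
  have h1 : Tendsto (fun h : ℝ => z ^ 2 / 2 * Real.sinc (h * z / 2) ^ 2) (𝓝 0)
      (𝓝 (z ^ 2 / 2 * Real.sinc (0 * z / 2) ^ 2)) := by
    apply Continuous.tendsto
    have := Real.continuous_sinc
    fun_prop
  simp only [zero_mul, zero_div, Real.sinc_zero, one_pow, mul_one] at h1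
  refine (h1.mono_left nhdsWithin_le_nhds).congr' ?_
  filter_upwards [self_mem_nhdsWithin] with h hh
  exact (one_sub_cos_div z h (ne_of_gt hh)).symm

lemma sq_integrable (ν : Measure E3) [IsProbabilityMeasure ν]
    (h : ∀ ξ, p ξ = ∫ v, Real.cos ⟪v, ξ⟫ ∂ν) {C : ℝ} (hC : ∀ ξ, 1 - p ξ ≤ C * ‖ξ‖ ^ 2) (ω : E3) :
    Integrable (fun v : E3 => ⟪v, ω⟫ ^ 2) ν := by
  refine ⟨by fun_prop, ?_⟩
  have hu : Tendsto (fun n : ℕ => 1 / ((n : ℝ) + 1)) atTop (𝓝[>] 0) := by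
    rw [tendsto_nhdsWithin_iff]
    exact ⟨tendsto_one_div_add_atTop_nhds_zero_nat, Eventually.of_forall fun n => by
      simp only [mem_Ioi]; positivity⟩
  set f : ℕ → E3 → ENNReal := fun n v => ENNReal.ofReal
    ((1 - Real.cos (1 / ((n : ℝ) + 1) * ⟪v, ω⟫)) / (1 / ((n : ℝ) + 1)) ^ 2) with hf
  have hlim : ∀ v, liminf (fun n => f n v) atTop = ENNReal.ofReal (⟪v, ω⟫ ^ 2 / 2) := fun v =>
    Tendsto.liminf_eq ((ENNReal.continuous_ofReal.tendsto _).comp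
      ((tendsto_one_sub_cos ⟪v, ω⟫).comp hu))
  have hintg : ∀ n, ∫⁻ v, f n v ∂ν ≤ ENNReal.ofReal (C * ‖ω‖ ^ 2) := by
    intro n
    have hn : (0:ℝ) < 1 / ((n : ℝ) + 1) := by positivity
    set k : ℝ := 1 / ((n : ℝ) + 1)
    rw [hf]
    simp only
    rw [← ofReal_integral_eq_lintegral_ofReal]
    · apply ENNReal.ofReal_le_ofReal
      rw [integral_div]
      have h2 := one_sub ν h (k • ω)
      simp only [inner_smul_right] at h2
      rw [← h2, div_le_iff₀ (by positivity)]
      have h3 := hC (k • ω)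
      rw [norm_smul, Real.norm_eq_abs, mul_pow, sq_abs] at h3
      linarith
    · have hi : Integrable (fun v : E3 => 1 - Real.cos ⟪v, k • ω⟫) ν :=
        (integrable_const _).sub (integrable_cos ν _)
      have := hi.div_const (k ^ 2)
      simp only [inner_smul_right] at this
      exact this
    · refine ae_of_all _ fun v => ?_
      have := Real.cos_le_one (k * ⟪v, ω⟫)
      simp only [Pi.zero_apply]
      apply div_nonneg <;> [linarith; positivity]
  have h4 : ∫⁻ v, ENNReal.ofReal (⟪v, ω⟫ ^ 2 / 2) ∂ν ≤ ENNReal.ofReal (C * ‖ω‖ ^ 2) := by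
    simp_rw [← hlim]
    refine (lintegral_liminf_le fun n => ?_).trans ?_
    · rw [hf]; fun_prop
    · refine liminf_le_of_le (by isBoundedDefault) fun b hb => ?_
      obtain ⟨n, hn⟩ := hb.exists
      exact hn.trans (hintg n)
  have h5 : HasFiniteIntegral (fun v : E3 => ⟪v, ω⟫ ^ 2 / 2) ν := by
    rw [hasFiniteIntegral_iff_ofReal (ae_of_all _ fun v => by simp only [Pi.zero_apply]; positivity)]
    exact h4.trans_lt ENNReal.ofReal_lt_top
  convert h5.const_mul 2 using 2
  ring

lemma differentiable (h : PD p) {C : ℝ} (hC : ∀ ξ, 1 - p ξ ≤ C * ‖ξ‖ ^ 2) :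
    Differentiable ℝ p := by
  obtain ⟨ν, hν, h0, h⟩ := h.exists_cos
  have h2 : MemLp (id : E3 → E3) 2 ν := by
    rw [memLp_two_iff_integrable_sq_norm (by fun_prop)]
    have : (fun v : E3 => ‖id v‖ ^ 2)
        = fun v => ∑ i : Fin 3, ⟪v, EuclideanSpace.basisFun (Fin 3) ℝ i⟫ ^ 2 := by
      ext v
      rw [id, EuclideanSpace.norm_sq_eq]
      refine Finset.sum_congr rfl fun i _ => ?_
      rw [real_inner_comm, EuclideanSpace.basisFun_inner]
      simp
    rw [this]
    exact integrable_finsetSum _ fun i _ => sq_integrable ν h hC _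
  have h1 : MemLp (id : E3 → E3) (1 : ℕ) ν := h2.mono_exponent (by norm_num)
  have h3 : p = fun ξ => Complex.reCLM (charFun ν ξ) := by ext ξ; rw [h0]; simp
  rw [h3]
  exact Complex.reCLM.differentiable.comp ((contDiff_charFun h1).differentiable (by norm_num))

lemma exists_limit (h : PD p) {C : ℝ} (hC : ∀ ξ, 1 - p ξ ≤ C * ‖ξ‖ ^ 2) (ω : E3) :
    ∃ l : ℝ, Tendsto (fun k : ℝ => (1 - p (k • ω)) / k ^ 2) (𝓝[>] 0) (𝓝 l) := by
  obtain ⟨ν, hν, h0, h⟩ := h.exists_cos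
  refine ⟨∫ v, ⟪v, ω⟫ ^ 2 / 2 ∂ν, ?_⟩
  have h1 : ∀ k : ℝ, (1 - p (k • ω)) / k ^ 2 = ∫ v, (1 - Real.cos (k * ⟪v, ω⟫)) / k ^ 2 ∂ν := by
    intro k
    rw [one_sub ν h, integral_div]
    simp only [inner_smul_right]
  simp_rw [h1]
  refine tendsto_integral_filter_of_dominated_convergence (fun v => ⟪v, ω⟫ ^ 2 / 2) ?_ ?_
    ((sq_integrable ν h hC ω).div_const 2) (ae_of_all _ fun v => tendsto_one_sub_cos _)
  · exact Eventually.of_forall fun k => by fun_prop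
  · filter_upwards [self_mem_nhdsWithin] with k hk
    refine ae_of_all _ fun v => ?_
    rw [Real.norm_of_nonneg (div_nonneg (by linarith [Real.cos_le_one (k * ⟪v, ω⟫)]) (by positivity))]
    rw [div_le_iff₀ (by have : (0:ℝ) < k := hk; positivity)]
    have := Real.one_sub_sq_div_two_le_cos (x := k * ⟪v, ω⟫)
    nlinarith

end PD

end part1

section part2
open scoped Pointwise

/-! ### The sphere -/

abbrev S2 : Type := sphere (0 : E3) 1

instance : IsFiniteMeasure sphμ := by unfold sphμ; infer_instance
instance : Measure.IsOpenPosMeasure sphμ := by unfold sphμ; infer_instance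

lemma S2.norm (σ : S2) : ‖(σ : E3)‖ = 1 := by simp
lemma S2.inner_self (σ : S2) : ⟪(σ : E3), (σ : E3)⟫ = 1 := by
  rw [real_inner_self_eq_norm_sq, S2.norm]; norm_num

/-- Action of a linear isometry on the sphere. -/
def sphMap (R : E3 ≃ₗᵢ[ℝ] E3) (σ : S2) : S2 := ⟨R σ, by simp⟩

@[simp] lemma sphMap_coe (R : E3 ≃ₗᵢ[ℝ] E3) (σ : S2) : (sphMap R σ : E3) = R σ := rfl

/-- Action of a linear isometry on the sphere, as a homeomorphism. -/
def sphHomeo (R : E3 ≃ₗᵢ[ℝ] E3) : S2 ≃ₜ S2 where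
  toFun := sphMap R
  invFun := sphMap R.symm
  left_inv σ := by ext1; simp
  right_inv σ := by ext1; simp
  continuous_toFun := by unfold sphMap; fun_prop
  continuous_invFun := by unfold sphMap; fun_prop

lemma sphMap_eq (R : E3 ≃ₗᵢ[ℝ] E3) : sphMap R = sphHomeo R := rfl

lemma sphMap_mp (R : E3 ≃ₗᵢ[ℝ] E3) : MeasurePreserving (sphMap R) sphμ sphμ := by
  have hm : Measurable (sphMap R) := (sphHomeo R).continuous.measurable
  refine ⟨hm, ?_⟩
  ext s hs
  rw [Measure.map_apply hm hs]
  unfold sphμ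
  rw [Measure.toSphere_apply' _ (hm hs), Measure.toSphere_apply' _ hs]
  congr 1
  have h1 : (Ioo (0:ℝ) 1 • ((↑) '' (sphMap R ⁻¹' s) : Set E3))
      = R ⁻¹' (Ioo (0:ℝ) 1 • ((↑) '' s : Set E3)) := by
    ext x
    simp only [Set.mem_smul, mem_image, mem_preimage]
    constructor
    · rintro ⟨a, ha, _, ⟨σ, hσ, rfl⟩, rfl⟩
      exact ⟨a, ha, _, ⟨_, hσ, rfl⟩, by simp⟩
    · rintro ⟨a, ha, _, ⟨σ, hσ, rfl⟩, h⟩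
      refine ⟨a, ha, _, ⟨sphMap R.symm σ, ?_, rfl⟩, ?_⟩
      · convert hσ; ext1; simp
      · apply R.injective; rw [← h]; simp
  rw [h1]
  exact R.measurePreserving.measure_preimage_equiv (f := R.toMeasurableEquiv) _

lemma sphMap_integrable (R : E3 ≃ₗᵢ[ℝ] E3) {F : Type*} [NormedAddCommGroup F] (f : S2 → F) :
    Integrable (fun σ => f (sphMap R σ)) sphμ ↔ Integrable f sphμ :=
  (sphMap_mp R).integrable_comp_emb (sphHomeo R).measurableEmbedding

lemma sphMap_integral (R : E3 ≃ₗᵢ[ℝ] E3) (f : S2 → ℝ) :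
    ∫ σ, f (sphMap R σ) ∂sphμ = ∫ σ, f σ ∂sphμ :=
  (sphMap_mp R).integral_comp (sphHomeo R).measurableEmbedding f

lemma sphMap_integrableAt (R : E3 ≃ₗᵢ[ℝ] E3) (f : S2 → ℝ) (σ₀ : S2)
    (h : IntegrableAtFilter f (𝓝 (sphMap R σ₀)) sphμ) :
    IntegrableAtFilter (fun σ => f (sphMap R σ)) (𝓝 σ₀) sphμ := by
  obtain ⟨U, hU, hi⟩ := h
  refine ⟨sphMap R ⁻¹' U, (sphHomeo R).continuous.continuousAt.preimage_mem_nhds hU, ?_⟩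
  exact ((sphMap_mp R).integrableOn_comp_preimage (sphHomeo R).measurableEmbedding).2 hi

/-- A reflection swapping two vectors of equal norm, fixing everything orthogonal to their
difference. -/
lemma exists_refl (v w : E3) (h : ‖v‖ = ‖w‖) : ∃ R : E3 ≃ₗᵢ[ℝ] E3, R v = w ∧ R w = v ∧
    ∀ e : E3, ⟪e, v⟫ = ⟪e, w⟫ → R e = e := by
  refine ⟨Submodule.reflection (Submodule.span ℝ {v - w})ᗮ, Submodule.reflection_sub h, ?_, ?_⟩
  · have := Submodule.reflection_sub h
    calc _ = Submodule.reflection (Submodule.span ℝ {v - w})ᗮ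
          (Submodule.reflection (Submodule.span ℝ {v - w})ᗮ v) := by rw [this]
      _ = v := Submodule.reflection_reflection _ _
  · intro e he
    apply Submodule.reflection_mem_subspace_eq_self
    rw [Submodule.mem_orthogonal_singleton_iff_inner_left, inner_sub_right, he, sub_self]

lemma exists_iso (e σ e' σ' : E3) (he : ‖e‖ = ‖e'‖) (hσ : ‖σ‖ = ‖σ'‖) (h : ⟪e, σ⟫ = ⟪e', σ'⟫) :
    ∃ R : E3 ≃ₗᵢ[ℝ] E3, R e = e' ∧ R σ = σ' := by
  obtain ⟨R, hR, -, -⟩ := exists_refl e e' he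
  obtain ⟨R', hR', -, hf⟩ := exists_refl (R σ) σ' (by simpa using hσ)
  refine ⟨R.trans R', ?_, ?_⟩
  · simp only [LinearIsometryEquiv.trans_apply, hR]
    apply hf
    rw [← hR, R.inner_map_map, h, hR]
  · simpa using hR'

lemma rank_E3 : 1 < Module.rank ℝ E3 := by
  rw [rank_eq_card_basis (EuclideanSpace.basisFun (Fin 3) ℝ).toBasis]; simp

instance : PreconnectedSpace S2 :=
  Subtype.preconnectedSpace (isPreconnected_sphere rank_E3 0 1)

lemma sphere_chain (Q : S2 → Prop) {γ : ℝ} (hγ : γ < 1)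
    (h : ∀ p q : S2, γ < ⟪(p : E3), (q : E3)⟫ → Q p → Q q) (p q : S2) : Q p → Q q := by
  refine PreconnectedSpace.induction₂' (fun p q => Q p → Q q) (fun x => ?_)
    ⟨fun a b c hab hbc ha => hbc (hab ha)⟩ p q
  have hc : Continuous fun y : S2 => ⟪(x : E3), (y : E3)⟫ := by fun_prop
  have : ∀ᶠ y : S2 in 𝓝 x, γ < ⟪(x : E3), (y : E3)⟫ :=
    hc.continuousAt.eventually (lt_mem_nhds (a := γ) (by
      show γ < ⟪(x : E3), (x : E3)⟫
      rw [S2.inner_self]; exact hγ))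
  filter_upwards [this] with y hy
  exact ⟨h x y hy, h y x (by rwa [real_inner_comm])⟩

/-- A unit vector orthogonal to two given vectors. -/
lemma exists_orth (v w : E3) : ∃ n : S2, ⟪(n : E3), v⟫ = 0 ∧ ⟪(n : E3), w⟫ = 0 := by
  have h1 : (Submodule.span ℝ {v, w})ᗮ ≠ ⊥ := by
    intro h
    rw [Submodule.orthogonal_eq_bot_iff] at h
    have h2 := finrank_span_le_card (R := ℝ) ({v, w} : Set E3)
    rw [h, finrank_top] at h2
    simp only [finrank_euclideanSpace, Fintype.card_fin, toFinset_insert, toFinset_singleton] at h2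
    have := Finset.card_le_two (a := v) (b := w)
    omega
  obtain ⟨n, hn, hn0⟩ := Submodule.exists_mem_ne_zero_of_ne_bot h1
  rw [Submodule.mem_orthogonal'] at hn
  have hv := hn v (Submodule.subset_span (by simp))
  have hw := hn w (Submodule.subset_span (by simp))
  refine ⟨⟨‖n‖⁻¹ • n, by simp [norm_smul, norm_ne_zero_iff.2 hn0]⟩, ?_, ?_⟩
  · simp [inner_smul_left, hv]
  · simp [inner_smul_left, hw]

/-! Geometry of `ξ⁺, ξ⁻`. -/

lemma xiPlus_norm_sq (ξ : E3) (σ : S2) :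
    ‖xiPlus ξ σ‖ ^ 2 = (‖ξ‖ ^ 2 + ‖ξ‖ * ⟪ξ, (σ : E3)⟫) / 2 := by
  unfold xiPlus
  rw [norm_add_sq_real, norm_smul, norm_smul, inner_smul_left, inner_smul_right, S2.norm]
  simp; ring

lemma xiMinus_norm_sq (ξ : E3) (σ : S2) :
    ‖xiMinus ξ σ‖ ^ 2 = (‖ξ‖ ^ 2 - ‖ξ‖ * ⟪ξ, (σ : E3)⟫) / 2 := by
  unfold xiMinus
  rw [norm_sub_sq_real, norm_smul, norm_smul, inner_smul_left, inner_smul_right, S2.norm]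
  simp; ring

lemma xi_add (ξ : E3) (σ : S2) : xiPlus ξ σ + xiMinus ξ σ = ξ := by
  unfold xiPlus xiMinus
  module

lemma xi_sub (ξ : E3) (σ : S2) : xiPlus ξ σ - xiMinus ξ σ = ‖ξ‖ • (σ : E3) := by
  unfold xiPlus xiMinus
  module

lemma xi_norm_add (ξ : E3) (σ : S2) : ‖xiPlus ξ σ‖ ^ 2 + ‖xiMinus ξ σ‖ ^ 2 = ‖ξ‖ ^ 2 := by
  rw [xiPlus_norm_sq, xiMinus_norm_sq]; ring

lemma continuous_xiPlus (ξ : E3) : Continuous (xiPlus ξ) := by unfold xiPlus; fun_prop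
lemma continuous_xiMinus (ξ : E3) : Continuous (xiMinus ξ) := by unfold xiMinus; fun_prop

lemma xiPlus_norm_le (ξ : E3) (σ : S2) : ‖xiPlus ξ σ‖ ≤ ‖ξ‖ := by
  have := xi_norm_add ξ σ
  exact (sq_le_sq₀ (norm_nonneg _) (norm_nonneg _)).1 (by nlinarith [sq_nonneg ‖xiMinus ξ σ‖])

lemma xiMinus_norm_le (ξ : E3) (σ : S2) : ‖xiMinus ξ σ‖ ≤ ‖ξ‖ := by
  have := xi_norm_add ξ σ
  exact (sq_le_sq₀ (norm_nonneg _) (norm_nonneg _)).1 (by nlinarith [sq_nonneg ‖xiPlus ξ σ‖])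

end part2

section part3
open scoped Pointwise

lemma cap_box_aux {v0 n q u : ℝ} (hu : 0 < u) (hu1 : u ≤ 1/100) (h1 : 1/2 < v0) (h2 : v0 < 55/100)
    (hq1 : 36/100*u < q) (hq2 : q < 4625/10000*u) (hn : 0 < n) (hn2 : n^2 = v0^2 + q) :
    u/2 < 1 - v0/n ∧ 1 - v0/n < u ∧ n < 1 := by
  have hnl : v0 < n := by nlinarith
  have hnu : n < 56/100 := by nlinarith
  have hp : (n - v0) * (n + v0) = q := by nlinarith
  have e : 1 - v0/n = (n - v0)/n := by field_simp
  rw [e, lt_div_iff₀ hn, div_lt_iff₀ hn]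
  refine ⟨?_, ?_, by linarith⟩
  · have : 36/100*u < (n-v0)*(111/100) := by nlinarith
    nlinarith
  · have : n - v0 < 4625/10000*u := by nlinarith
    nlinarith

lemma cap_basis {u : ℝ} (hu : 0 < u) (hu1 : u ≤ 1/100) :
    ENNReal.ofReal (15/10000 * u) ≤
      sphμ {σ : S2 | u/2 < 1 - ⟪(EuclideanSpace.single 0 1 : E3), (σ : E3)⟫ ∧
        1 - ⟪(EuclideanSpace.single 0 1 : E3), (σ : E3)⟫ < u} := by
  have hT : MeasurableSet {σ : S2 | u/2 < 1 - ⟪(EuclideanSpace.single 0 1 : E3), (σ : E3)⟫ ∧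
        1 - ⟪(EuclideanSpace.single 0 1 : E3), (σ : E3)⟫ < u} := by
    have hf : Measurable fun σ : S2 => 1 - ⟪(EuclideanSpace.single 0 1 : E3), (σ : E3)⟫ :=
      Continuous.measurable (by fun_prop)
    exact (measurableSet_lt measurable_const hf).inter (measurableSet_lt hf measurable_const)
  unfold sphμ
  rw [Measure.toSphere_apply' _ hT]
  set a : Fin 3 → ℝ := ![1/2, 6/10 * √u, 0]
  set b : Fin 3 → ℝ := ![55/100, 65/100 * √u, 2/10 * √u]
  have hs : √u * √u = u := Real.mul_self_sqrt hu.le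
  have hs0 : 0 < √u := Real.sqrt_pos.2 hu
  have hvol : (volume : Measure E3) ((WithLp.ofLp : E3 → (Fin 3 → ℝ)) ⁻¹' (Set.pi univ fun i => Ioo (a i) (b i)))
      = ENNReal.ofReal (5/10000 * u) := by
    rw [(PiLp.volume_preserving_ofLp (Fin 3)).measure_preimage
      (MeasurableSet.univ_pi fun i => measurableSet_Ioo).nullMeasurableSet, Real.volume_pi_Ioo,
      ← ENNReal.ofReal_prod_of_nonneg]
    · congr 1
      simp [Fin.prod_univ_three, a, b]
      nlinarith
    · intro i _
      fin_cases i
      · simp [a, b]; norm_num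
      · simp [a, b]; linarith
      · simp [a, b]
  have hsub : ((WithLp.ofLp : E3 → (Fin 3 → ℝ)) ⁻¹' (Set.pi univ fun i => Ioo (a i) (b i)))
      ⊆ Ioo (0:ℝ) 1 • ((↑) '' {σ : S2 | u/2 < 1 - ⟪(EuclideanSpace.single 0 1 : E3), (σ : E3)⟫ ∧
        1 - ⟪(EuclideanSpace.single 0 1 : E3), (σ : E3)⟫ < u} : Set E3) := by
    intro v hv
    have h0 := hv 0 (mem_univ _)
    have h1 := hv 1 (mem_univ _)
    have h2 := hv 2 (mem_univ _)
    simp only [a, b, mem_Ioo, Matrix.cons_val] at h0 h1 h2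
    have hn : 0 < ‖v‖ := by
      rw [norm_pos_iff]
      rintro rfl
      simp at h0
      linarith
    have hn2 : ‖v‖^2 = (v 0)^2 + ((v 1)^2 + (v 2)^2) := by
      rw [EuclideanSpace.norm_sq_eq, Fin.sum_univ_three]; simp; ring
    have hq1 : 36/100*u < (v 1)^2 + (v 2)^2 := by nlinarith
    have hq2 : (v 1)^2 + (v 2)^2 < 4625/10000*u := by
      have : (v 1)^2 < 4225/10000*u := by nlinarith
      have : (v 2)^2 < 4/100*u := by nlinarith
      linarith
    obtain ⟨k1, k2, k3⟩ := cap_box_aux hu hu1 h0.1 h0.2 hq1 hq2 hn hn2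
    refine Set.mem_smul.2 ⟨‖v‖, ⟨hn, k3⟩, ‖v‖⁻¹ • v, ⟨⟨‖v‖⁻¹ • v, by simp [norm_smul, hn.ne']⟩, ?_, rfl⟩, ?_⟩
    · have : ⟪(EuclideanSpace.single 0 1 : E3), ‖v‖⁻¹ • v⟫ = v 0 / ‖v‖ := by
        rw [inner_smul_right, EuclideanSpace.inner_single_left]; simp; ring
      simp only [mem_ofPred_eq, this]
      exact ⟨k1, k2⟩
    · rw [smul_smul, mul_inv_cancel₀ hn.ne', one_smul]
  calc ENNReal.ofReal (15/10000 * u) = 3 * ENNReal.ofReal (5/10000 * u) := by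
        rw [show (3:ENNReal) = ENNReal.ofReal 3 by simp, ← ENNReal.ofReal_mul (by norm_num)]
        congr 1; ring
    _ ≤ _ := by
        rw [← hvol]
        simp only [finrank_euclideanSpace, Fintype.card_fin]
        gcongr
        simp

lemma cap_lemma {u : ℝ} (hu : 0 < u) (hu1 : u ≤ 1/100) (e : S2) :
    15/10000 * u ≤ sphμ.real {σ : S2 | u/2 < 1 - ⟪(e : E3), (σ : E3)⟫ ∧
        1 - ⟪(e : E3), (σ : E3)⟫ < u} := by
  obtain ⟨R, hR, -, -⟩ := exists_refl (e : E3) (EuclideanSpace.single 0 1) (by simp)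
  have h := cap_basis hu hu1
  have h2 := (sphMap_mp R).measure_preimage_equiv (f := (sphHomeo R).toMeasurableEquiv)
    {σ : S2 | u/2 < 1 - ⟪(EuclideanSpace.single 0 1 : E3), (σ : E3)⟫ ∧
        1 - ⟪(EuclideanSpace.single 0 1 : E3), (σ : E3)⟫ < u}
  rw [← h2] at h
  have h3 : ((sphHomeo R).toMeasurableEquiv) ⁻¹'
    {σ : S2 | u/2 < 1 - ⟪(EuclideanSpace.single 0 1 : E3), (σ : E3)⟫ ∧
        1 - ⟪(EuclideanSpace.single 0 1 : E3), (σ : E3)⟫ < u} = {σ : S2 | u/2 < 1 - ⟪(e : E3), (σ : E3)⟫ ∧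
        1 - ⟪(e : E3), (σ : E3)⟫ < u} := by
    ext σ
    have : ⟪(EuclideanSpace.single 0 1 : E3), ((sphHomeo R).toMeasurableEquiv σ : E3)⟫ = ⟪(e : E3), (σ : E3)⟫ := by
      rw [← hR]; exact R.inner_map_map _ _
    simp only [mem_preimage, mem_ofPred_eq, this]
  rw [h3] at h
  rw [measureReal_def]
  rwa [ENNReal.ofReal_le_iff_le_toReal (measure_ne_top _ _)] at h

lemma b_lower {b : ℝ → ℝ} {s K : ℝ} (hs0 : 0 < s) (hK : 0 < K) (hb : KernelSingular b s K) :
    ∃ γ : ℝ, 0 < γ ∧ γ < 1 ∧ ∃ c : ℝ, 0 < c ∧ ∀ x, 1 - γ < x → x < 1 → c * (1 - x) ^ (-(1 + s)) ≤ b x := by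
  unfold KernelSingular at hb
  have h1 : ∀ᶠ θ in 𝓝[>] (0:ℝ), K/2 < b (Real.cos θ) * θ ^ (2 + 2*s) :=
    hb.eventually (lt_mem_nhds (by linarith))
  rw [eventually_nhdsWithin_iff, Metric.eventually_nhds_iff] at h1
  obtain ⟨ε, hε, h1⟩ := h1
  have h2 : Tendsto Real.arccos (𝓝 1) (𝓝 0) := by
    have := Real.continuous_arccos.tendsto 1
    rwa [Real.arccos_one] at this
  have h3 := h2.eventually (gt_mem_nhds hε)
  rw [Metric.eventually_nhds_iff] at h3
  obtain ⟨η, hη, h3⟩ := h3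
  refine ⟨min η (1/2), by positivity, by linarith [min_le_right η (1/2)],
    K/2 * (2/π^2)^(1+s), by positivity, fun x hx1 hx2 => ?_⟩
  have hxη : 1 - η < x := by linarith [min_le_left η (1/2)]
  have hx0 : 0 < x := by linarith [min_le_right η (1/2)]
  set θ := Real.arccos x with hθ
  have hθ0 : 0 < θ := Real.arccos_pos.2 hx2
  have hθπ : θ ≤ π := Real.arccos_le_pi x
  have hcos : Real.cos θ = x := Real.cos_arccos (by linarith) hx2.le
  have hθε : θ < ε := h3 (by rw [Real.dist_eq, abs_lt]; constructor <;> linarith)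
  have h4 := h1 (y := θ) (by rw [Real.dist_eq, sub_zero, abs_of_pos hθ0]; exact hθε) hθ0
  rw [hcos] at h4
  have h5 : 2/π^2 * θ^2 ≤ 1 - x := by
    have := Real.cos_le_one_sub_mul_cos_sq (x := θ) (by rw [abs_of_pos hθ0]; exact hθπ)
    rw [hcos] at this
    linarith
  have h1x : 0 < 1 - x := by linarith
  have h6 : θ ^ (2 + 2*s) = (θ^2) ^ (1 + s) := by
    rw [← Real.rpow_natCast, ← Real.rpow_mul hθ0.le]; congr 1; push_cast; ring
  have h7 : (2/π^2)^(1+s) * θ ^ (2 + 2*s) ≤ (1-x)^(1+s) := by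
    rw [h6, ← Real.mul_rpow (by positivity) (by positivity)]
    exact Real.rpow_le_rpow (by positivity) h5 (by linarith)
  rw [Real.rpow_neg h1x.le, ← div_eq_mul_inv, div_le_iff₀ (by positivity)]
  have hbx : 0 < b x := by
    by_contra hneg
    have : b x * θ ^ (2+2*s) ≤ 0 := mul_nonpos_of_nonpos_of_nonneg (not_lt.1 hneg) (by positivity)
    linarith
  calc K/2 * (2/π^2)^(1+s) ≤ (b x * θ ^ (2+2*s)) * (2/π^2)^(1+s) := by gcongr
    _ = b x * ((2/π^2)^(1+s) * θ ^ (2+2*s)) := by ring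
    _ ≤ _ := by gcongr

/-- First-touch lemma. -/
lemma first_touch {A : Set E3} (hA : IsCompact A) {t1 t2 : ℝ} (g : ℝ → E3 → ℝ)
    (hg : ContinuousOn (fun q : ℝ × E3 => g q.1 q.2) (Icc t1 t2 ×ˢ A))
    (h0 : ∀ ξ ∈ A, g t1 ξ < 0)
    (hd : ∀ τ, t1 < τ → τ ≤ t2 → ∀ ξ ∈ A, (∀ η ∈ A, g τ η ≤ 0) → g τ ξ = 0 →
      ∃ d < 0, HasDerivWithinAt (fun r => g r ξ) d (Iic τ) τ) :
    ∀ τ ∈ Icc t1 t2, ∀ ξ ∈ A, g τ ξ < 0 := by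
  by_contra hcon
  push Not at hcon
  obtain ⟨τ0, hτ0, ξ0, hξ0, hge⟩ := hcon
  set B : Set (ℝ × E3) := (Icc t1 t2 ×ˢ A) ∩ (fun q : ℝ × E3 => g q.1 q.2) ⁻¹' (Ici 0)
  have hBc : IsClosed B :=
    hg.preimage_isClosed_of_isClosed ((isCompact_Icc.prod hA).isClosed) isClosed_Ici
  have hBk : IsCompact B := (isCompact_Icc.prod hA).of_isClosed_subset hBc inter_subset_left
  obtain ⟨⟨τ, ξ⟩, hmem, hmin⟩ := hBk.exists_isMinOn ⟨(τ0, ξ0), ⟨⟨hτ0, hξ0⟩, hge⟩⟩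
    continuous_fst.continuousOn
  obtain ⟨⟨hτ, hξ⟩, hgτ⟩ := hmem
  simp only [mem_preimage, mem_Ici] at hτ hξ hgτ
  have hτ1 : t1 < τ := by
    rcases hτ.1.eq_or_lt with h | h
    · subst h; exact absurd (h0 ξ hξ) (not_lt.2 hgτ)
    · exact h
  have hbefore : ∀ r ∈ Ico t1 τ, ∀ η ∈ A, g r η < 0 := by
    intro r hr η hη
    by_contra hneg
    have : (r, η) ∈ B := ⟨⟨⟨hr.1, hr.2.le.trans hτ.2⟩, hη⟩, not_lt.1 hneg⟩
    exact absurd (hmin this) (not_le.2 hr.2)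
  have hle : ∀ η ∈ A, g τ η ≤ 0 := by
    intro η hη
    have hc : ContinuousWithinAt (fun r => g r η) (Icc t1 t2) τ := by
      have h1 := hg (τ, η) ⟨hτ, hη⟩
      exact h1.comp (f := fun r : ℝ => (r, η)) (by fun_prop) (fun r hr => ⟨hr, hη⟩)
    have hc2 := hc.mono (s := Ico t1 τ) (fun r hr => ⟨hr.1, hr.2.le.trans hτ.2⟩)
    have hne : (𝓝[Ico t1 τ] τ).NeBot := by
      rw [← mem_closure_iff_nhdsWithin_neBot, closure_Ico hτ1.ne]; exact ⟨hτ1.le, le_rfl⟩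
    exact le_of_tendsto hc2 (by
      filter_upwards [self_mem_nhdsWithin] with r hr using (hbefore r hr η hη).le)
  have heq : g τ ξ = 0 := le_antisymm (hle ξ hξ) hgτ
  obtain ⟨d, hd0, hd⟩ := hd τ hτ1 hτ.2 ξ hξ hle heq
  rw [hasDerivWithinAt_iff_tendsto_slope] at hd
  have hne : (𝓝[Ioo t1 τ] τ).NeBot := by
    rw [← mem_closure_iff_nhdsWithin_neBot, closure_Ioo hτ1.ne]; exact ⟨hτ1.le, le_rfl⟩
  have hd' := hd.mono_left (nhdsWithin_mono τ (s := Ioo t1 τ) (fun r hr => ⟨hr.2.le, hr.2.ne⟩))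
  have : 0 ≤ d := ge_of_tendsto hd' (by
    filter_upwards [self_mem_nhdsWithin] with r hr
    rw [slope_def_field, heq]
    have := hbefore r ⟨hr.1.le, hr.2⟩ ξ hξ
    apply div_nonneg_of_nonpos
    · linarith
    · linarith [hr.2])
  linarith

end part3

section part4
open scoped Pointwise

/-- The modulus version of the integrand. -/
def modInt (b : ℝ → ℝ) (ψ : ℝ → E3 → ℂ) (t : ℝ) (ξ : E3) (σ : S2) : ℝ :=
  b (⟪ξ, (σ : E3)⟫ / ‖ξ‖) * (‖ψ t (xiPlus ξ σ)‖ * ‖ψ t (xiMinus ξ σ)‖ - ‖ψ t ξ‖)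

section sol
variable {b : ℝ → ℝ} {ψ : ℝ → E3 → ℂ} {ψ₀ : E3 → ℂ}

lemma meas_b (hb : Measurable b) (ξ : E3) :
    Measurable fun σ : S2 => b (⟪ξ, (σ : E3)⟫ / ‖ξ‖) :=
  hb.comp (Continuous.measurable (by fun_prop))

lemma sol_cont (hψ : IsBobylevSolution b ψ ψ₀) {t : ℝ} (ht : 0 ≤ t) : Continuous (ψ t) :=
  continuous_of_isCharFn (hψ.isCharFn t ht)

lemma integrable_modInt (hb : Measurable b) (hψ : IsBobylevSolution b ψ ψ₀) {t : ℝ} (ht : 0 ≤ t)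
    (ξ : E3) : Integrable (modInt b ψ t ξ) sphμ := by
  have hc := sol_cont hψ ht
  have hp := continuous_xiPlus ξ
  have hm := continuous_xiMinus ξ
  refine (hψ.integrable t ht ξ).mono ?_ (ae_of_all _ fun σ => ?_)
  · unfold modInt
    exact ((meas_b hb ξ).mul (Continuous.measurable (by fun_prop))).aestronglyMeasurable
  · unfold modInt bobylevIntegrand
    rw [norm_mul, norm_mul, Complex.norm_real]
    gcongr
    rw [← norm_mul]
    exact abs_norm_sub_norm_le _ _

lemma normsq_deriv (hb : Measurable b) (hb0 : ∀ x, 0 ≤ b x) (hψ : IsBobylevSolution b ψ ψ₀)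
    {t : ℝ} (ht : 0 ≤ t) (ξ : E3) :
    ∃ d, d ≤ 2 * (‖ψ t ξ‖ * ∫ σ, modInt b ψ t ξ σ ∂sphμ) ∧
      HasDerivWithinAt (fun τ => ‖ψ τ ξ‖ ^ 2) d (Ici 0) t := by
  refine ⟨_, ?_, (hψ.eq t ht ξ).norm_sq⟩
  rw [← integral_inner (hψ.integrable t ht ξ), ← integral_const_mul ‖ψ t ξ‖]
  refine mul_le_mul_of_nonneg_left ?_ (zero_le_two)
  refine integral_mono ((hψ.integrable t ht ξ).const_inner _)
    ((integrable_modInt hb hψ ht ξ).const_mul _) fun σ => ?_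
  simp only [bobylevIntegrand, modInt]
  rw [← Complex.real_smul, real_inner_smul_right, inner_sub_right, real_inner_self_eq_norm_sq]
  have h1 := real_inner_le_norm (ψ t ξ) (ψ t (xiPlus ξ σ) * ψ t (xiMinus ξ σ))
  rw [norm_mul] at h1
  calc _ ≤ b (⟪ξ, (σ : E3)⟫ / ‖ξ‖) *
      (‖ψ t ξ‖ * (‖ψ t (xiPlus ξ σ)‖ * ‖ψ t (xiMinus ξ σ)‖) - ‖ψ t ξ‖ ^ 2) :=
        mul_le_mul_of_nonneg_left (by linarith) (hb0 _)
    _ = _ := by ring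

lemma normsq_deriv_left (hb : Measurable b) (hb0 : ∀ x, 0 ≤ b x) (hψ : IsBobylevSolution b ψ ψ₀)
    {t : ℝ} (ht : 0 < t) (ξ : E3) :
    ∃ d, d ≤ 2 * (‖ψ t ξ‖ * ∫ σ, modInt b ψ t ξ σ ∂sphμ) ∧
      HasDerivAt (fun τ => ‖ψ τ ξ‖ ^ 2) d t := by
  obtain ⟨d, h1, h2⟩ := normsq_deriv hb hb0 hψ ht.le ξ
  exact ⟨d, h1, h2.hasDerivAt (Ici_mem_nhds ht)⟩

lemma norm_le_one (hψ : IsBobylevSolution b ψ ψ₀) {t : ℝ} (ht : 0 ≤ t) (ξ : E3) :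
    ‖ψ t ξ‖ ≤ 1 := norm_le_one_of_isCharFn (hψ.isCharFn t ht) ξ

lemma norm_zero' (hψ : IsBobylevSolution b ψ ψ₀) {t : ℝ} (ht : 0 ≤ t) : ‖ψ t 0‖ = 1 := by
  have := (pd_of_isCharFn (hψ.isCharFn t ht)).zero
  nlinarith [norm_nonneg (ψ t 0)]

lemma pd_nsmul_mem {p : E3 → ℝ} (h : PD p) {ξ : E3} (h1 : p ξ = 1) (n : ℕ) : p ((n:ℝ) • ξ) = 1 := by
  induction n with
  | zero => simp [h.zero]
  | succ n ih => push_cast; rw [add_smul, one_smul]; exact h.add_mem ih h1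

lemma all_one_of_sphere {p : E3 → ℝ} (h : PD p) {r : ℝ} (hr : 0 < r)
    (h1 : ∀ σ : S2, p (r • (σ : E3)) = 1) (ξ : E3) : p ξ = 1 := by
  have key : ∀ η : E3, ‖η‖ ≤ 2 * r → p η = 1 := by
    intro η hη
    obtain ⟨n, hn, -⟩ := exists_orth η η
    have hη2 : ‖η‖ ^ 2 ≤ 4 * r ^ 2 := by nlinarith [norm_nonneg η]
    set d := √(r ^ 2 - ‖η‖ ^ 2 / 4)
    have hd : d ^ 2 = r ^ 2 - ‖η‖ ^ 2 / 4 := Real.sq_sqrt (by linarith)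
    have hno : ∀ a : ℝ, a ^ 2 = d ^ 2 → ‖(1/2 : ℝ) • η + a • (n : E3)‖ = r := by
      intro a ha
      rw [← sq_eq_sq₀ (norm_nonneg _) hr.le, norm_add_sq_real, norm_smul, norm_smul,
        inner_smul_left, inner_smul_right, S2.norm, real_inner_comm, hn]
      simp only [Real.norm_eq_abs, mul_pow, sq_abs, ha, hd]
      norm_num
      ring
    have hp : ∀ a : ℝ, a ^ 2 = d ^ 2 → p ((1/2 : ℝ) • η + a • (n : E3)) = 1 := by
      intro a ha
      have := h1 ⟨r⁻¹ • ((1/2 : ℝ) • η + a • (n : E3)), by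
        simp only [mem_sphere_zero_iff_norm, norm_smul, hno a ha]
        simp [abs_of_pos hr, hr.ne']⟩
      simpa only [smul_smul, mul_inv_cancel₀ hr.ne', one_smul] using this
    have h2 := h.add_mem (hp d rfl) (hp (-d) (by ring))
    rw [← h2]; congr 1
    module
  obtain ⟨n, hn⟩ := exists_nat_gt (‖ξ‖ / (2 * r))
  have hn0 : (0:ℝ) < n := lt_of_le_of_lt (by positivity) hn
  have h3 := pd_nsmul_mem h (key ((n:ℝ)⁻¹ • ξ) (by
    rw [norm_smul, norm_inv, Real.norm_of_nonneg hn0.le]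
    rw [div_lt_iff₀ (by positivity)] at hn
    rw [inv_mul_le_iff₀ hn0]; exact hn.le)) n
  rwa [smul_smul, mul_inv_cancel₀ hn0.ne', one_smul] at h3

lemma inner_smul_div {r : ℝ} (hr : 0 < r) (e σ : S2) :
    ⟪r • (e : E3), (σ : E3)⟫ / ‖r • (e : E3)‖ = ⟪(e : E3), (σ : E3)⟫ := by
  rw [inner_smul_left, norm_smul, S2.norm, Real.norm_of_nonneg hr.le]
  simp [hr.ne']

lemma exists_polar (ξ : E3) (hξ : ξ ≠ 0) : ∃ r : ℝ, ∃ e : S2, 0 < r ∧ r = ‖ξ‖ ∧ ξ = r • (e : E3) := by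
  have h := norm_pos_iff.2 hξ
  exact ⟨‖ξ‖, ⟨‖ξ‖⁻¹ • ξ, by simp [norm_smul, h.ne']⟩, h, rfl, by simp [smul_smul, h.ne']⟩

/-- Dichotomy: if the modulus is one somewhere off the origin, it is one everywhere. -/
lemma dichotomy (hb : Measurable b) (hb0 : ∀ x, 0 ≤ b x) (hψ : IsBobylevSolution b ψ ψ₀)
    {γ : ℝ} (hγ : 0 < γ) (hbγ : ∀ x, 1 - γ < x → x < 1 → 0 < b x)
    {t : ℝ} (ht : 0 < t) {ξ : E3} (hξ : ξ ≠ 0) (h1 : ‖ψ t ξ‖ = 1) (η : E3) : ‖ψ t η‖ = 1 := by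
  have hpd := pd_of_isCharFn (hψ.isCharFn t ht.le)
  have hiff : ∀ ζ, ‖ψ t ζ‖ ^ 2 = 1 ↔ ‖ψ t ζ‖ = 1 := fun ζ => by
    constructor
    · intro h; nlinarith [norm_nonneg (ψ t ζ)]
    · intro h; rw [h]; norm_num
  obtain ⟨r, e, hr, -, hre⟩ := exists_polar ξ hξ
  have step : ∀ e σ : S2, 1 - γ < ⟪(e : E3), (σ : E3)⟫ → ‖ψ t (r • (e : E3))‖ ^ 2 = 1 →
      ‖ψ t (r • (σ : E3))‖ ^ 2 = 1 := by
    intro e σ hσ he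
    rw [hiff] at he
    set ξ := r • (e : E3) with hξdef
    have hnξ : ‖ξ‖ = r := by rw [hξdef, norm_smul, S2.norm, Real.norm_of_nonneg hr.le, mul_one]
    obtain ⟨d, hd, hder⟩ := normsq_deriv_left hb hb0 hψ ht ξ
    have hd0 : d = 0 := by
      refine IsLocalMax.hasDerivAt_eq_zero ?_ hder
      filter_upwards [Ici_mem_nhds ht] with τ hτ
      have := norm_le_one hψ hτ ξ
      rw [he]; nlinarith [norm_nonneg (ψ τ ξ)]
    rw [hd0, he, one_mul] at hd
    have hneg : ∀ σ, modInt b ψ t ξ σ ≤ 0 := by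
      intro σ
      unfold modInt
      refine mul_nonpos_of_nonneg_of_nonpos (hb0 _) ?_
      rw [he]
      have h1 := norm_le_one hψ ht.le (xiPlus ξ σ)
      have h2 := norm_le_one hψ ht.le (xiMinus ξ σ)
      nlinarith [norm_nonneg (ψ t (xiPlus ξ σ)), norm_nonneg (ψ t (xiMinus ξ σ))]
    have hintg := integrable_modInt hb hψ ht.le ξ
    have hz : ∫ σ, (-modInt b ψ t ξ) σ ∂sphμ = 0 := by
      simp only [Pi.neg_apply]
      apply le_antisymm
      · rw [integral_neg]; linarith
      · exact integral_nonneg fun σ => by simpa using hneg σ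
    rw [integral_eq_zero_iff_of_nonneg (fun σ => by simpa using hneg σ) hintg.neg] at hz
    rcases (show ⟪(e : E3), (σ : E3)⟫ ≤ 1 by
      have := real_inner_le_norm (e : E3) (σ : E3)
      rwa [S2.norm, S2.norm, mul_one] at this).eq_or_lt with h1 | hlt
    · have : (e : E3) = σ := (inner_eq_one_iff_of_norm_eq_one (S2.norm e) (S2.norm σ)).1 h1
      rw [← this, ← hξdef, he]; norm_num
    set U : Set S2 := {σ | 1 - γ < ⟪(e : E3), (σ : E3)⟫ ∧ ⟪(e : E3), (σ : E3)⟫ < 1}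
    have hcU : Continuous fun σ : S2 => ⟪(e : E3), (σ : E3)⟫ := by fun_prop
    have hU : IsOpen U := (isOpen_lt continuous_const hcU).inter (isOpen_lt hcU continuous_const)
    have hc := sol_cont hψ ht.le
    have hp := continuous_xiPlus ξ
    have hm := continuous_xiMinus ξ
    have hE : EqOn (fun σ => ‖ψ t (xiPlus ξ σ)‖ * ‖ψ t (xiMinus ξ σ)‖) (fun _ => 1) U := by
      refine Measure.eqOn_open_of_ae_eq (μ := sphμ) ?_ hU (by fun_prop) (by fun_prop)
      rw [EventuallyEq, ae_restrict_iff' hU.measurableSet]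
      filter_upwards [hz] with σ hσ hσU
      simp only [modInt, Pi.zero_apply, Pi.neg_apply, neg_eq_zero] at hσ
      rw [inner_smul_div hr] at hσ
      rcases mul_eq_zero.1 hσ with h | h
      · exact absurd h (hbγ _ hσU.1 hσU.2).ne'
      · rw [he] at h; linarith
    have hprod := hE (show σ ∈ U from ⟨hσ, hlt⟩)
    simp only at hprod
    have h1 := norm_le_one hψ ht.le (xiPlus ξ σ)
    have h2 := norm_le_one hψ ht.le (xiMinus ξ σ)
    have h3 : ‖ψ t (xiPlus ξ σ)‖ = 1 := by
      nlinarith [norm_nonneg (ψ t (xiPlus ξ σ)), norm_nonneg (ψ t (xiMinus ξ σ))]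
    have h4 : ‖ψ t (xiMinus ξ σ)‖ = 1 := by
      nlinarith [norm_nonneg (ψ t (xiPlus ξ σ)), norm_nonneg (ψ t (xiMinus ξ σ))]
    have h5 := hpd.sub_mem ((hiff _).2 h3) ((hiff _).2 h4)
    rwa [xi_sub, hnξ] at h5
  rw [← hiff]
  refine all_one_of_sphere hpd hr (fun σ => ?_) η
  exact sphere_chain (fun σ : S2 => ‖ψ t (r • (σ : E3))‖ ^ 2 = 1) (by linarith) step e σ
    (by rw [← hre, h1]; norm_num)

end sol

end part4

section part5
open scoped Pointwise

lemma nondeg {p : E3 → ℝ} (h : PD p) (hlt : ∀ ξ, ξ ≠ 0 → p ξ < 1) :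
    ∃ c : ℝ, 0 < c ∧ ∀ ξ, ‖ξ‖ ≤ 1 → c * ‖ξ‖ ^ 2 ≤ 1 - p ξ := by
  set A : Set E3 := closedBall 0 1 ∩ {ξ | 1/2 ≤ ‖ξ‖}
  have hA : IsCompact A := (isCompact_closedBall 0 1).inter_right
    (isClosed_le continuous_const continuous_norm)
  have hne : A.Nonempty := ⟨EuclideanSpace.single 0 1, by simp [A]; norm_num⟩
  obtain ⟨ξ0, hξ0, hmin⟩ := hA.exists_isMinOn hne
    (f := fun ξ => 1 - p ξ) (continuous_const.sub h.continuous).continuousOn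
  have hξ00 : ξ0 ≠ 0 := by
    rintro rfl
    have h2 : (1:ℝ)/2 ≤ ‖(0:E3)‖ := hξ0.2
    rw [norm_zero] at h2; norm_num at h2
  set m := 1 - p ξ0
  have hm : 0 < m := by have := hlt ξ0 hξ00; simp only [m]; linarith
  have base : ∀ ξ, 1/2 ≤ ‖ξ‖ → ‖ξ‖ ≤ 1 → m * ‖ξ‖ ^ 2 ≤ 1 - p ξ := by
    intro ξ h1 h2
    have : m ≤ 1 - p ξ := hmin (show ξ ∈ A from ⟨by simpa using h2, h1⟩)
    have h3 : ‖ξ‖ ^ 2 ≤ 1 := by nlinarith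
    nlinarith
  have key : ∀ n : ℕ, ∀ ξ, (1/2) ^ (n+1) ≤ ‖ξ‖ → ‖ξ‖ ≤ 1 → m * ‖ξ‖ ^ 2 ≤ 1 - p ξ := by
    intro n
    induction n with
    | zero => intro ξ h1 h2; exact base ξ (by simpa using h1) h2
    | succ n ih =>
      intro ξ h1 h2
      by_cases h3 : 1/2 ≤ ‖ξ‖
      · exact base ξ h3 h2
      · have hn : ‖(2:ℝ) • ξ‖ = 2 * ‖ξ‖ := by rw [norm_smul]; simp
        have h4 := ih ((2:ℝ) • ξ) (by rw [hn]; rw [pow_succ] at h1; linarith)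
          (by rw [hn]; linarith [not_le.1 h3])
        have h5 := h.doubling ξ
        rw [hn] at h4
        nlinarith
  refine ⟨m, hm, fun ξ hξ => ?_⟩
  by_cases h0 : ξ = 0
  · subst h0; simp [h.zero]
  · obtain ⟨n, hn⟩ := exists_pow_lt_of_lt_one (norm_pos_iff.2 h0) (show (1/2:ℝ) < 1 by norm_num)
    refine key n ξ ?_ hξ
    rw [pow_succ]
    have : (0:ℝ) < (1/2)^n := by positivity
    linarith

lemma kdist_bound {φ φ' : E3 → ℂ} (h : KBdd 2 φ) (h' : KBdd 2 φ') (ξ : E3) (hξ : ξ ≠ 0) :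
    ‖φ ξ - φ' ξ‖ ≤ Kdist 2 φ φ' * ‖ξ‖ ^ 2 := by
  obtain ⟨C, hC⟩ := h
  obtain ⟨C', hC'⟩ := h'
  have hb : BddAbove (range fun ξ : {ξ : E3 // ξ ≠ 0} => ‖φ ξ.1 - φ' ξ.1‖ / ‖(ξ.1 : E3)‖ ^ (2:ℝ)) := by
    refine ⟨C + C', ?_⟩
    rintro _ ⟨⟨η, hη⟩, rfl⟩
    have hpos : 0 < ‖η‖ ^ (2:ℝ) := by have := norm_pos_iff.2 hη; positivity
    simp only
    rw [div_le_iff₀ hpos]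
    have h1 := hC η hη
    have h2 := hC' η hη
    have h3 : ‖φ η - φ' η‖ ≤ ‖φ η - 1‖ + ‖φ' η - 1‖ := by
      rw [show φ η - φ' η = (φ η - 1) - (φ' η - 1) by ring]; exact norm_sub_le _ _
    linarith
  have h1 := le_ciSup hb ⟨ξ, hξ⟩
  have hpos : 0 < ‖ξ‖ := norm_pos_iff.2 hξ
  simp only at h1
  rw [div_le_iff₀ (by positivity), Real.rpow_two] at h1
  exact h1

lemma kbdd_one_sub {φ : E3 → ℂ} (hc : IsCharFn φ) (h : KBdd 2 φ) :
    ∃ C : ℝ, ∀ ξ, 1 - ‖φ ξ‖ ^ 2 ≤ C * ‖ξ‖ ^ 2 := by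
  obtain ⟨C, hC⟩ := h
  refine ⟨2 * C, fun ξ => ?_⟩
  by_cases h0 : ξ = 0
  · subst h0
    have := (pd_of_isCharFn hc).zero
    rw [this]; simp
  · have h1 := hC ξ h0
    rw [Real.rpow_two] at h1
    have h2 : 1 - ‖φ ξ‖ ≤ ‖φ ξ - 1‖ := by
      have := norm_sub_norm_le (1:ℂ) (φ ξ)
      rw [norm_one, norm_sub_rev] at this
      exact this
    have h3 := norm_le_one_of_isCharFn hc ξ
    nlinarith [norm_nonneg (φ ξ)]

section sol
variable {b : ℝ → ℝ} {ψ : ℝ → E3 → ℂ} {ψ₀ : E3 → ℂ}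

lemma unif_nondeg (hψ : IsBobylevSolution b ψ ψ₀)
    (hψK : ∀ t ≥ 0, KBdd 2 (ψ t)) (hψcont : KContinuous 2 ψ) {t : ℝ} (ht : 0 < t)
    (hlt : ∀ ξ, ξ ≠ 0 → ‖ψ t ξ‖ < 1) :
    ∃ t0, 0 < t0 ∧ t0 < t ∧ ∃ c : ℝ, 0 < c ∧ ∀ τ ∈ Icc t0 t, ∀ ξ, ‖ξ‖ ≤ 1 →
      ‖ψ τ ξ‖ ≤ Real.exp (-(c * ‖ξ‖ ^ 2)) := by
  obtain ⟨c, hc, hcb⟩ := nondeg (pd_of_isCharFn (hψ.isCharFn t ht.le)) (fun ξ hξ => by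
    have := hlt ξ hξ; nlinarith [norm_nonneg (ψ t ξ)])
  have h1 := (hψcont t ht.le).eventually (gt_mem_nhds (show (0:ℝ) < c/4 by linarith))
  rw [nhdsWithin_eq_nhds.2 (Ici_mem_nhds ht), Metric.eventually_nhds_iff] at h1
  obtain ⟨ε, hε, h1⟩ := h1
  refine ⟨t - min (ε/2) (t/2), by linarith [min_le_right (ε/2) (t/2)], by
    have : 0 < min (ε/2) (t/2) := by positivity
    linarith, c/4, by positivity, fun τ hτ ξ hξ => ?_⟩
  have hτ0 : 0 ≤ τ := by have := hτ.1; linarith [min_le_right (ε/2) (t/2)]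
  have h2 : Kdist 2 (ψ τ) (ψ t) < c/4 := h1 (by
    rw [Real.dist_eq, abs_lt]
    constructor <;> linarith [min_le_left (ε/2) (t/2), hτ.1, hτ.2])
  by_cases h0 : ξ = 0
  · subst h0; simp [norm_le_one hψ hτ0]
  have h3 := kdist_bound (hψK τ hτ0) (hψK t ht.le) ξ h0
  have hx : 0 < ‖ξ‖ ^ 2 := by have := norm_pos_iff.2 h0; positivity
  have h4 : ‖ψ τ ξ‖ ≤ ‖ψ t ξ‖ + c/4 * ‖ξ‖ ^ 2 := by
    have := norm_sub_norm_le (ψ τ ξ) (ψ t ξ)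
    nlinarith
  have h5 := hcb ξ hξ
  have h6 := Real.add_one_le_exp (-(c/4 * ‖ξ‖ ^ 2))
  have h7 := norm_le_one hψ ht.le ξ
  nlinarith [norm_nonneg (ψ t ξ)]

/-- Barrier lemma. -/
lemma barrier (hb : Measurable b) (hb0 : ∀ x, 0 ≤ b x) (hψ : IsBobylevSolution b ψ ψ₀)
    {A : Set E3} (hA : IsCompact A) {t1 t2 : ℝ} (ht1 : 0 ≤ t1) (f f' : ℝ → E3 → ℝ)
    (hf : ContinuousOn (fun q : ℝ × E3 => f q.1 q.2) (Icc t1 t2 ×ˢ A))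
    (hf' : ∀ τ, ∀ ξ, HasDerivAt (fun r => f r ξ) (f' τ ξ) τ)
    (h0 : ∀ ξ ∈ A, ‖ψ t1 ξ‖ < Real.exp (f t1 ξ))
    (hd : ∀ τ, t1 < τ → τ ≤ t2 → ∀ ξ ∈ A, (∀ η ∈ A, ‖ψ τ η‖ ≤ Real.exp (f τ η)) →
      ‖ψ τ ξ‖ = Real.exp (f τ ξ) →
      ∫ σ, modInt b ψ τ ξ σ ∂sphμ < Real.exp (f τ ξ) * f' τ ξ) :
    ∀ τ ∈ Icc t1 t2, ∀ ξ ∈ A, ‖ψ τ ξ‖ < Real.exp (f τ ξ) := by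
  have key := first_touch hA (t1 := t1) (t2 := t2)
    (fun τ ξ => ‖ψ τ ξ‖ ^ 2 - Real.exp (f τ ξ) ^ 2) ?_ ?_ ?_
  · intro τ hτ ξ hξ
    have := key τ hτ ξ hξ
    exact (sq_lt_sq₀ (norm_nonneg _) (Real.exp_pos _).le).1 (by linarith)
  · have h1 : ContinuousOn (fun q : ℝ × E3 => ψ q.1 q.2) (Icc t1 t2 ×ˢ A) :=
      hψ.cont.mono (fun q hq => ⟨ht1.trans hq.1.1, trivial⟩)
    exact (h1.norm.pow 2).sub (hf.rexp.pow 2)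
  · intro ξ hξ
    have := h0 ξ hξ
    have h2 := (sq_lt_sq₀ (norm_nonneg (ψ t1 ξ)) (Real.exp_pos _).le).2 this
    linarith
  · intro τ hτ1 hτ2 ξ hξ hle heq
    have hτ0 : 0 < τ := lt_of_le_of_lt ht1 hτ1
    have heq' : ‖ψ τ ξ‖ = Real.exp (f τ ξ) :=
      (sq_eq_sq₀ (norm_nonneg _) (Real.exp_pos _).le).1 (by linarith)
    have hle' : ∀ η ∈ A, ‖ψ τ η‖ ≤ Real.exp (f τ η) := fun η hη =>
      (sq_le_sq₀ (norm_nonneg _) (Real.exp_pos _).le).1 (by linarith [hle η hη])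
    obtain ⟨d, hd1, hd2⟩ := normsq_deriv_left hb hb0 hψ hτ0 ξ
    have h3 := hd τ hτ1 hτ2 ξ hξ hle' heq'
    refine ⟨_, ?_, (hd2.sub ((hf' τ ξ).exp.pow 2)).hasDerivWithinAt⟩
    rw [heq'] at hd1
    have hE := Real.exp_pos (f τ ξ)
    have := mul_lt_mul_of_pos_left h3 hE
    norm_num
    nlinarith

lemma log_le_rpow {s y : ℝ} (hs0 : 0 < s) (hs1 : s < 1) (hy : 0 ≤ y) : Real.log (1 + y) ≤ y ^ s / s := by
  rw [le_div_iff₀ hs0, mul_comm, ← Real.log_rpow (by linarith)]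
  have h1 : (1 + y) ^ s ≤ 1 ^ s + y ^ s := Real.rpow_add_le_add_rpow (by norm_num) hy hs0.le hs1.le
  rw [Real.one_rpow] at h1
  have h2 := Real.log_le_sub_one_of_pos (show 0 < (1+y)^s by positivity)
  linarith

set_option maxHeartbeats 2000000 in
lemma smoothing {s : ℝ} (hs0 : 0 < s) (hs1 : s < 1)
    (hb : Measurable b) (hb0 : ∀ x, 0 ≤ b x) (hψ : IsBobylevSolution b ψ ψ₀)
    {γ cb : ℝ} (hγ : 0 < γ) (hcb : 0 < cb)
    (hbγ : ∀ x, 1 - γ < x → x < 1 → cb * (1 - x) ^ (-(1 + s)) ≤ b x)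
    {t0 t c : ℝ} (ht0 : 0 ≤ t0) (ht : t0 < t) (hc : 0 < c)
    (hnd : ∀ τ ∈ Icc t0 t, ∀ ξ, ‖ξ‖ ≤ 1 → ‖ψ τ ξ‖ ≤ Real.exp (-(c * ‖ξ‖ ^ 2)))
    {M : ℝ} (hM : 0 < M) :
    ∃ δ, 0 < δ ∧ δ ≤ 1 ∧ ∀ ξ, ‖ψ t ξ‖ ≤ Real.exp (-(M * Real.log (1 + δ * ‖ξ‖ ^ 2))) := by
  set κ := min γ (1/100)
  have hκ : 0 < κ := by positivity
  have hκγ : κ ≤ γ := min_le_left _ _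
  have hκ1 : κ ≤ 1/100 := min_le_right _ _
  set k := M / (t - t0)
  have hk : 0 < k := div_pos hM (by linarith)
  have hkt : k * (t - t0) = M := div_mul_cancel₀ _ (by linarith)
  set g := (1 - Real.exp (-(c * κ / 8))) * cb * (15/10000) * κ ^ (-s)
  have hg : 0 < g := by
    have : 0 < 1 - Real.exp (-(c * κ / 8)) := by
      rw [sub_pos, Real.exp_lt_one_iff]; have : 0 < c * κ := by positivity
      linarith
    positivity
  obtain ⟨δ, hδ0, hδ1, hδ2, hδ3⟩ : ∃ δ : ℝ, 0 < δ ∧ δ ≤ 1 ∧ M * δ ≤ c/2 ∧ k * (δ ^ s / s) < g := by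
    have h1 : Tendsto (fun δ : ℝ => M * δ) (𝓝[>] 0) (𝓝 (M * 0)) :=
      ((continuous_const.mul continuous_id).tendsto 0).mono_left nhdsWithin_le_nhds
    have h2 : Tendsto (fun δ : ℝ => k * (δ ^ s / s)) (𝓝[>] 0) (𝓝 (k * (0 ^ s / s))) := by
      have : ContinuousAt (fun δ : ℝ => k * (δ ^ s / s)) 0 :=
        ((Real.continuousAt_rpow_const 0 s (Or.inr hs0.le)).div_const s).const_mul k
      exact this.tendsto.mono_left nhdsWithin_le_nhds
    rw [mul_zero] at h1
    rw [Real.zero_rpow hs0.ne', zero_div, mul_zero] at h2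
    have h3 := h1.eventually (gt_mem_nhds (show (0:ℝ) < c/2 by linarith))
    have h4 := h2.eventually (gt_mem_nhds hg)
    have h5 : ∀ᶠ δ : ℝ in 𝓝[>] 0, δ < 1 :=
      (gt_mem_nhds (show (0:ℝ) < 1 by norm_num)).filter_mono nhdsWithin_le_nhds
    obtain ⟨δ, a1, a2, a3, a4⟩ := (h3.and (h4.and (h5.and self_mem_nhdsWithin))).exists
    exact ⟨δ, a4, a3.le, a1.le, a2⟩
  refine ⟨δ, hδ0, hδ1, ?_⟩
  have hlogle : ∀ y : ℝ, 0 ≤ y → Real.log (1 + δ * y) ≤ δ * y := by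
    intro y hy
    have := Real.log_le_sub_one_of_pos (show 0 < 1 + δ * y by positivity)
    linarith
  have hlog0 : ∀ y : ℝ, 0 ≤ y → 0 ≤ Real.log (1 + δ * y) := fun y hy =>
    Real.log_nonneg (by nlinarith [mul_nonneg hδ0.le hy])
  -- the barrier
  have main : ∀ L : ℝ, ∀ ε : ℝ, 0 < ε → ∀ ξ : E3, 1 ≤ ‖ξ‖ → ‖ξ‖ ≤ L →
      ‖ψ t ξ‖ < Real.exp (-(k * (t - t0)) * Real.log (1 + δ * ‖ξ‖^2) + ε * ‖ξ‖^2) := by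
    intro L ε hε ξ h1 h2
    set A : Set E3 := closedBall 0 L ∩ {ξ | 1 ≤ ‖ξ‖}
    have hA : IsCompact A := (isCompact_closedBall 0 L).inter_right
      (isClosed_le continuous_const continuous_norm)
    refine barrier hb hb0 hψ hA (t1 := t0) (t2 := t) ht0
      (fun τ ξ => -(k * (τ - t0)) * Real.log (1 + δ * ‖ξ‖^2) + ε * ‖ξ‖^2)
      (fun τ ξ => -k * Real.log (1 + δ * ‖ξ‖^2)) ?_ ?_ ?_ ?_ t ⟨ht.le, le_rfl⟩ ξ
      ⟨by simpa using h2, h1⟩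
    · apply Continuous.continuousOn
      have : Continuous fun q : ℝ × E3 => Real.log (1 + δ * ‖q.2‖^2) :=
        Continuous.log (by fun_prop) (fun q => by positivity)
      fun_prop
    · intro τ η
      have h3 : HasDerivAt (fun r : ℝ => -(k * (r - t0))) (-k) τ := by
        have := (((hasDerivAt_id τ).sub_const t0).const_mul k).neg
        rw [mul_one] at this
        exact this
      exact (h3.mul_const _).add_const _
    · intro η hη
      have hη1 : 1 ≤ ‖η‖ := hη.2
      simp only [sub_self, mul_zero, neg_zero, zero_mul, zero_add]
      refine lt_of_le_of_lt (norm_le_one hψ ht0 η) ?_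
      rw [Real.one_lt_exp_iff]; positivity
    · intro τ hτ1 hτ2 η hη hle heq
      have hη1 : 1 ≤ ‖η‖ := hη.2
      have hηL : ‖η‖ ≤ L := by simpa using hη.1
      have hτ0 : 0 ≤ τ := ht0.trans hτ1.le
      set F : ℝ → ℝ := fun y => -(k * (τ - t0)) * Real.log (1 + δ * y) + ε * y with hF
      have hkτ : k * (τ - t0) ≤ M := by rw [← hkt]; gcongr
      have hkτ0 : 0 ≤ k * (τ - t0) := mul_nonneg hk.le (by linarith)
      have small : ∀ ζ : E3, ‖ζ‖ ≤ 1 → ‖ψ τ ζ‖ ≤ Real.exp (F (‖ζ‖^2) - c/2 * ‖ζ‖^2) := by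
        intro ζ hζ
        refine (hnd τ ⟨hτ1.le, hτ2⟩ ζ hζ).trans ?_
        rw [Real.exp_le_exp, hF]
        simp only
        have a1 := hlogle (‖ζ‖^2) (by positivity)
        have a2 := hlog0 (‖ζ‖^2) (by positivity)
        have a3 : k * (τ - t0) * Real.log (1 + δ * ‖ζ‖^2) ≤ M * (δ * ‖ζ‖^2) := by gcongr
        have a4 : M * δ * ‖ζ‖^2 ≤ c/2 * ‖ζ‖^2 := by gcongr
        have a5 : 0 ≤ ε * ‖ζ‖^2 := by positivity
        nlinarith
      have all : ∀ ζ : E3, ‖ζ‖ ≤ L → ‖ψ τ ζ‖ ≤ Real.exp (F (‖ζ‖^2)) := by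
        intro ζ hζ
        by_cases h3 : 1 ≤ ‖ζ‖
        · exact hle ζ ⟨by simpa using hζ, h3⟩
        · refine (small ζ (not_le.1 h3).le).trans ?_
          rw [Real.exp_le_exp]
          have : 0 ≤ c/2 * ‖ζ‖^2 := by positivity
          linarith
      have superadd : ∀ σ : S2, F (‖xiPlus η σ‖^2) + F (‖xiMinus η σ‖^2) ≤ F (‖η‖^2) := by
        intro σ
        rw [← xi_norm_add η σ]
        have p1 : 0 ≤ ‖xiPlus η σ‖^2 := by positivity
        have p2 : 0 ≤ ‖xiMinus η σ‖^2 := by positivity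
        generalize ‖xiPlus η σ‖^2 = y1 at p1 ⊢
        generalize ‖xiMinus η σ‖^2 = y2 at p2 ⊢
        have a1 : Real.log (1 + δ * (y1 + y2)) ≤ Real.log (1 + δ * y1) + Real.log (1 + δ * y2) := by
          rw [← Real.log_mul (by positivity) (by positivity)]
          apply Real.log_le_log (by positivity)
          nlinarith [mul_nonneg (mul_nonneg hδ0.le p1) (mul_nonneg hδ0.le p2)]
        simp only [hF]
        nlinarith
      set E := Real.exp (F (‖η‖^2)) with hE
      have hE0 : 0 < E := Real.exp_pos _
      have heq' : ‖ψ τ η‖ = E := heq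
      have hneg : ∀ σ : S2, modInt b ψ τ η σ ≤ 0 := by
        intro σ
        unfold modInt
        refine mul_nonpos_of_nonneg_of_nonpos (hb0 _) ?_
        rw [heq', sub_nonpos, hE]
        calc _ ≤ Real.exp (F (‖xiPlus η σ‖^2)) * Real.exp (F (‖xiMinus η σ‖^2)) := by
              gcongr
              · exact all _ ((xiPlus_norm_le _ _).trans hηL)
              · exact all _ ((xiMinus_norm_le _ _).trans hηL)
          _ ≤ _ := by rw [← Real.exp_add, Real.exp_le_exp]; exact superadd σ
      obtain ⟨r, e, hr, hrη, hre⟩ := exists_polar η (by rintro rfl; simp at hη1; linarith)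
      rw [← hrη] at hη1
      set x := r ^ 2 with hx
      have hx1 : 1 ≤ x := by nlinarith
      have hx0 : 0 < x := by linarith
      set u := κ / x with hu
      have hu0 : 0 < u := by positivity
      have huκ : u ≤ κ := div_le_self hκ.le hx1
      have hux : u * x = κ := div_mul_cancel₀ _ hx0.ne'
      set S : Set S2 := {σ : S2 | u/2 < 1 - ⟪(e : E3), (σ : E3)⟫ ∧ 1 - ⟪(e : E3), (σ : E3)⟫ < u}
      have hcap := cap_lemma hu0 (huκ.trans hκ1) e
      have hcU : Continuous fun σ : S2 => 1 - ⟪(e : E3), (σ : E3)⟫ := by fun_prop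
      have hS : MeasurableSet S :=
        ((isOpen_lt continuous_const hcU).inter (isOpen_lt hcU continuous_const)).measurableSet
      set q := 1 - Real.exp (-(c * κ / 8)) with hq
      have hq0 : 0 < q := by
        rw [hq, sub_pos, Real.exp_lt_one_iff]; have : 0 < c * κ := by positivity
        linarith
      set B := cb * u ^ (-(1+s)) * (E * q) with hB
      have hB0 : 0 < B := by positivity
      have honS : ∀ σ ∈ S, modInt b ψ τ η σ ≤ -B := by
        intro σ hσ
        obtain ⟨hσ1, hσ2⟩ := hσ
        unfold modInt
        have hins : ⟪η, (σ : E3)⟫ / ‖η‖ = ⟪(e : E3), (σ : E3)⟫ := by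
          rw [hre]; exact inner_smul_div hr e σ
        have hbσ : cb * u ^ (-(1+s)) ≤ b ⟪(e : E3), (σ : E3)⟫ := by
          refine le_trans ?_ (hbγ _ (by linarith) (by linarith))
          gcongr cb * ?_
          exact Real.rpow_le_rpow_of_nonpos (by linarith) hσ2.le (by linarith)
        have hxm : ‖xiMinus η σ‖^2 = x * (1 - ⟪(e : E3), (σ : E3)⟫) / 2 := by
          rw [xiMinus_norm_sq, ← hrη, hx]
          rw [div_eq_iff (by rw [← hrη]; exact hr.ne')] at hins
          rw [hins, ← hrη]; ring
        have hxm1 : κ / 4 ≤ ‖xiMinus η σ‖^2 := by rw [hxm]; nlinarith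
        have hxm2 : ‖xiMinus η σ‖^2 ≤ 1 := by rw [hxm]; nlinarith
        have hpr : ‖ψ τ (xiPlus η σ)‖ * ‖ψ τ (xiMinus η σ)‖ ≤ E * (1 - q) := by
          calc _ ≤ Real.exp (F (‖xiPlus η σ‖^2)) *
                Real.exp (F (‖xiMinus η σ‖^2) - c/2 * ‖xiMinus η σ‖^2) := by
                gcongr
                · exact all _ ((xiPlus_norm_le _ _).trans hηL)
                · exact small _ (by nlinarith [norm_nonneg (xiMinus η σ)])
            _ ≤ E * Real.exp (-(c * κ / 8)) := by
                rw [hE, ← Real.exp_add, ← Real.exp_add, Real.exp_le_exp]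
                have := superadd σ
                nlinarith
            _ = _ := by rw [hq]; ring
        rw [hins, heq']
        have h9 : ‖ψ τ (xiPlus η σ)‖ * ‖ψ τ (xiMinus η σ)‖ - E ≤ -(E * q) := by linarith
        have hEq : 0 < E * q := by positivity
        calc _ ≤ b ⟪(e : E3), (σ : E3)⟫ * -(E * q) := mul_le_mul_of_nonneg_left h9 (hb0 _)
          _ ≤ -B := by
            rw [hB]
            have := mul_le_mul_of_nonneg_right hbσ hEq.le
            linarith
      have hintg : ∫ σ, modInt b ψ τ η σ ∂sphμ ≤ -B * sphμ.real S := by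
        have h3 : ∫ σ, modInt b ψ τ η σ ∂sphμ ≤ ∫ σ, S.indicator (fun _ => -B) σ ∂sphμ := by
          refine integral_mono (integrable_modInt hb hψ hτ0 η)
            ((integrable_const _).indicator hS) fun σ => ?_
          by_cases hσ : σ ∈ S
          · rw [indicator_of_mem hσ]; exact honS σ hσ
          · rw [indicator_of_notMem hσ]; exact hneg σ
        rw [integral_indicator_const _ hS] at h3
        rw [smul_eq_mul, mul_comm] at h3
        exact h3
      have hgx : B * (15/10000 * u) = E * (g * x ^ s) := by
        have e1 : u ^ (-(1+s)) * u = u ^ (-s) := by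
          rw [← Real.rpow_add_one hu0.ne']; congr 1; ring
        have e2 : u ^ (-s) = κ ^ (-s) * x ^ s := by
          rw [hu, Real.div_rpow hκ.le hx0.le, Real.rpow_neg hx0.le, div_inv_eq_mul]
        calc B * (15/10000 * u) = cb * (E * q) * (15/10000) * (u ^ (-(1+s)) * u) := by rw [hB]; ring
          _ = _ := by rw [e1, e2]; simp only [g]; ring
      have hfin : k * Real.log (1 + δ * x) < g * x ^ s := by
        have e1 := log_le_rpow hs0 hs1 (show 0 ≤ δ * x by positivity)
        rw [Real.mul_rpow hδ0.le hx0.le] at e1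
        have hxs : 0 < x ^ s := by positivity
        calc _ ≤ k * (δ ^ s * x ^ s / s) := by gcongr
          _ = k * (δ ^ s / s) * x ^ s := by ring
          _ < _ := by gcongr
      have hηx : ‖η‖^2 = x := by rw [← hrη]
      show _ < E * (-k * Real.log (1 + δ * ‖η‖^2))
      rw [hηx]
      have h8 : B * (15/10000*u) ≤ B * sphμ.real S := by gcongr
      have h9 := mul_lt_mul_of_pos_left hfin hE0
      have h10 : E * (-k * Real.log (1 + δ * x)) = -(E * (k * Real.log (1 + δ * x))) := by ring
      have h11 : -B * sphμ.real S = -(B * sphμ.real S) := by ring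
      rw [h10]
      rw [h11] at hintg
      linarith
  intro ξ
  by_cases h1 : 1 ≤ ‖ξ‖
  · have h2 := fun ε hε => (main ‖ξ‖ ε hε ξ h1 le_rfl).le
    have h3 : Tendsto (fun ε : ℝ => Real.exp (-(k * (t - t0)) * Real.log (1 + δ * ‖ξ‖^2) + ε * ‖ξ‖^2))
        (𝓝[>] 0) (𝓝 (Real.exp (-(k * (t - t0)) * Real.log (1 + δ * ‖ξ‖^2) + 0 * ‖ξ‖^2))) := by
      apply Tendsto.mono_left _ nhdsWithin_le_nhds
      apply Continuous.tendsto (f := fun ε : ℝ => Real.exp (-(k * (t - t0)) * Real.log (1 + δ * ‖ξ‖^2) + ε * ‖ξ‖^2))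
      fun_prop
    have h4 := ge_of_tendsto h3 (by filter_upwards [self_mem_nhdsWithin] with ε hε using h2 ε hε)
    rw [hkt] at h4
    simpa using h4
  · refine (hnd t ⟨ht.le, le_rfl⟩ ξ (not_le.1 h1).le).trans ?_
    rw [Real.exp_le_exp, neg_le_neg_iff]
    have a1 := hlogle (‖ξ‖^2) (by positivity)
    calc M * Real.log (1 + δ * ‖ξ‖^2) ≤ M * (δ * ‖ξ‖^2) := by gcongr
      _ = M * δ * ‖ξ‖^2 := by ring
      _ ≤ c/2 * ‖ξ‖^2 := by gcongr
      _ ≤ _ := by gcongr; linarith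

lemma final_integral {φ : E3 → ℂ} {δ : ℝ} (hδ0 : 0 < δ) (hδ1 : δ ≤ 1) (N : ℕ)
    (h : ∀ ξ, ‖φ ξ‖ ≤ Real.exp (-(((N:ℝ) + 2) * Real.log (1 + δ * ‖ξ‖ ^ 2)))) :
    (∫⁻ ξ : E3, ENNReal.ofReal ((1 + ‖ξ‖ ^ 2) ^ N * ‖φ ξ‖ ^ 2)) < ⊤ := by
  have h1 : Integrable (fun ξ : E3 => (1 + ‖ξ‖ ^ 2) ^ (-(4:ℝ)/2)) :=
    integrable_rpow_neg_one_add_norm_sq (by simp; norm_num)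
  have h2 := h1.const_mul ((δ⁻¹) ^ (2 * (N + 2)))
  refine lt_of_le_of_lt (lintegral_mono fun ξ => ENNReal.ofReal_le_ofReal ?_) h2.lintegral_lt_top
  have hx : 0 ≤ ‖ξ‖ ^ 2 := by positivity
  set x := ‖ξ‖ ^ 2
  have h3 : ‖φ ξ‖ ≤ ((1 + δ * x) ^ (N + 2))⁻¹ := by
    refine (h ξ).trans (le_of_eq ?_)
    rw [Real.exp_neg]
    congr 1
    rw [← Real.log_rpow (by positivity), Real.exp_log (by positivity), show ((N:ℝ)+2) = ((N+2:ℕ):ℝ) by push_cast; ring, Real.rpow_natCast]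
  have h4 : ((1 + δ * x) ^ (N + 2))⁻¹ ≤ δ⁻¹ ^ (N + 2) * ((1 + x) ^ (N + 2))⁻¹ := by
    rw [← inv_pow, ← inv_pow, ← mul_pow, ← mul_inv]
    gcongr
    nlinarith
  have h5 : (1 + x) ^ (-(4:ℝ)/2) = ((1 + x) ^ 2)⁻¹ := by
    rw [show (-(4:ℝ)/2) = -((2:ℕ):ℝ) by norm_num, Real.rpow_neg (by positivity), Real.rpow_natCast]
  rw [h5]
  have h6 : ‖φ ξ‖ ^ 2 ≤ (δ⁻¹ ^ (N + 2) * ((1 + x) ^ (N + 2))⁻¹) ^ 2 := by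
    gcongr; exact h3.trans h4
  have hy : 1 ≤ 1 + x := by linarith
  calc (1 + x) ^ N * ‖φ ξ‖ ^ 2 ≤ (1 + x) ^ N * (δ⁻¹ ^ (N + 2) * ((1 + x) ^ (N + 2))⁻¹) ^ 2 := by gcongr
    _ = δ⁻¹ ^ (2 * (N + 2)) * (((1 + x) ^ (N + 2))⁻¹ * ((1 + x) ^ 2)⁻¹) := by
        have : (1 + x) ≠ 0 := by positivity
        field_simp; ring
    _ ≤ δ⁻¹ ^ (2 * (N + 2)) * (1 * ((1 + x) ^ 2)⁻¹) := by
        gcongr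
        exact inv_le_one_of_one_le₀ (one_le_pow₀ hy)
    _ = _ := by rw [one_mul]
end sol

end part5

section part6
open scoped Pointwise

section sol
variable {b : ℝ → ℝ} {ψ : ℝ → E3 → ℂ} {ψ₀ : E3 → ℂ}

/-- The weight `b(x)(1-|x|)`. -/
def wfun (b : ℝ → ℝ) (e : S2) (σ : S2) : ℝ :=
  b ⟪(e : E3), (σ : E3)⟫ * (1 - |⟪(e : E3), (σ : E3)⟫|)

lemma S2.abs_inner_le (e σ : S2) : |⟪(e : E3), (σ : E3)⟫| ≤ 1 := by
  have := abs_real_inner_le_norm (e : E3) (σ : E3)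
  rwa [S2.norm, S2.norm, one_mul] at this

lemma wfun_all {e₀ : S2} (h : Integrable (wfun b e₀) sphμ) (e : S2) :
    Integrable (wfun b e) sphμ ∧ ∫ σ, wfun b e σ ∂sphμ = ∫ σ, wfun b e₀ σ ∂sphμ := by
  obtain ⟨R, hR, -, -⟩ := exists_refl (e : E3) (e₀ : E3) (by rw [S2.norm, S2.norm])
  have hw : ∀ σ, wfun b e₀ (sphMap R σ) = wfun b e σ := by
    intro σ
    unfold wfun
    rw [sphMap_coe, ← hR, LinearIsometryEquiv.inner_map_map]
  have h1 := (sphMap_integrable R (wfun b e₀)).2 h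
  have h2 := sphMap_integral R (wfun b e₀)
  simp only [hw] at h1 h2
  exact ⟨h1, h2⟩

lemma caseA_aux {E a X z P : ℝ} (hE0 : 0 < E) (ha : 0 < a) (ha1 : a ≤ 1) (hX : 0 ≤ X) (hX1 : X ≤ 1)
    (hz0 : 0 ≤ z) (hz1 : z ≤ 1) (h : P ≤ E * Real.exp (a * (X * z / 2))) :
    P - E ≤ E * a * z := by
  set u := a * (X * z / 2) with hu
  have hu0 : 0 ≤ u := by positivity
  have hv : X * z ≤ z := mul_le_of_le_one_left hz0 hX1
  have hu2 : 2 * u ≤ a * z := by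
    have := mul_le_mul_of_nonneg_left hv ha.le
    rw [hu]; linarith
  have haz : a * z ≤ 1 := mul_le_one₀ ha1 hz0 hz1
  have hexp : Real.exp u - 1 ≤ 2 * u := by
    have h5 := Real.add_one_le_exp (-u)
    have h6 : Real.exp u * Real.exp (-u) = 1 := by rw [← Real.exp_add]; simp
    nlinarith [Real.exp_pos u]
  have := mul_le_mul_of_nonneg_left (hexp.trans hu2) hE0.le
  linarith

lemma caseA_step (hb : Measurable b) (hb0 : ∀ x, 0 ≤ b x) (hψ : IsBobylevSolution b ψ ψ₀)
    {m : ℝ} (hw : ∀ e, Integrable (wfun b e) sphμ) (hm : ∀ e, ∫ σ, wfun b e σ ∂sphμ = m)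
    {t1 t2 : ℝ} (ht1 : 0 ≤ t1) (ht12 : t1 ≤ t2) (hst : (m + 1) * (t2 - t1) ≤ 1 / 4)
    (hlt : ∀ ξ, ξ ≠ 0 → ‖ψ t1 ξ‖ < 1) : ∃ ξ, ξ ≠ 0 ∧ ‖ψ t2 ξ‖ < 1 := by
  have hm0 : 0 ≤ m := by
    obtain ⟨e, -, -⟩ := exists_orth 0 0
    rw [← hm e]
    exact integral_nonneg fun σ => mul_nonneg (hb0 _) (by linarith [S2.abs_inner_le e σ])
  obtain ⟨c, hc, hcb⟩ := nondeg (pd_of_isCharFn (hψ.isCharFn t1 ht1)) (fun ξ hξ => by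
    have := hlt ξ hξ; nlinarith [norm_nonneg (ψ t1 ξ)])
  set a := min (c / 2) 1
  have ha : 0 < a := by positivity
  have hac : a ≤ c / 2 := min_le_left _ _
  have ha1 : a ≤ 1 := min_le_right _ _
  have key := barrier hb hb0 hψ (isCompact_closedBall (0 : E3) 1) (t1 := t1) (t2 := t2) ht1
    (fun τ ξ => a * (1 / 2 + (m + 1) * (τ - t1)) - a * ‖ξ‖ ^ 2)
    (fun τ ξ => a * (m + 1)) ?_ ?_ ?_ ?_
  · obtain ⟨e, -, -⟩ := exists_orth 0 0
    have h1 := key t2 ⟨ht12, le_rfl⟩ (e : E3) (by simp)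
    refine ⟨e, ?_, h1.trans_le ?_⟩
    · intro h; have := S2.norm e; rw [h] at this; simp at this
    · rw [Real.exp_le_one_iff, S2.norm]
      nlinarith
  · apply Continuous.continuousOn
    fun_prop
  · intro τ η
    have h3 : HasDerivAt (fun r : ℝ => (m + 1) * (r - t1)) (m + 1) τ := by
      have := ((hasDerivAt_id τ).sub_const t1).const_mul (m + 1)
      rw [mul_one] at this
      exact this
    exact ((h3.const_add _).const_mul a).sub_const _
  · intro ξ hξ
    have hξ1 : ‖ξ‖ ≤ 1 := by simpa using hξ
    have h1 := hcb ξ hξ1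
    have h2 := Real.add_one_le_exp (-(c * ‖ξ‖ ^ 2))
    have h3 : ‖ψ t1 ξ‖ ^ 2 ≤ Real.exp (-(c / 2 * ‖ξ‖ ^ 2)) ^ 2 := by
      rw [← Real.exp_nat_mul]
      push_cast
      rw [show 2 * -(c / 2 * ‖ξ‖ ^ 2) = -(c * ‖ξ‖ ^ 2) by ring]
      linarith
    have h4 := (sq_le_sq₀ (norm_nonneg _) (Real.exp_pos _).le).1 h3
    refine h4.trans_lt ?_
    rw [Real.exp_lt_exp, sub_self, mul_zero, add_zero]
    nlinarith [sq_nonneg ‖ξ‖]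
  · intro τ hτ1 hτ2 ξ hξ hle heq
    have hτ0 : 0 ≤ τ := ht1.trans hτ1.le
    have hξ1 : ‖ξ‖ ≤ 1 := by simpa using hξ
    set G := a * (1 / 2 + (m + 1) * (τ - t1)) with hG
    have hG0 : 0 < G := by
      have : 0 ≤ (m + 1) * (τ - t1) := mul_nonneg (by linarith) (by linarith)
      positivity
    have hξ0 : ξ ≠ 0 := by
      rintro rfl
      have h1 := norm_le_one hψ hτ0 (0 : E3)
      rw [heq] at h1
      rw [Real.exp_le_one_iff] at h1
      simp at h1; linarith
    obtain ⟨r, e, hr, hrξ, hre⟩ := exists_polar ξ hξ0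
    set E := Real.exp (G - a * ‖ξ‖ ^ 2) with hE
    have hE0 : 0 < E := Real.exp_pos _
    have heq' : ‖ψ τ ξ‖ = E := heq
    have hpt : ∀ σ : S2, modInt b ψ τ ξ σ ≤ E * a * wfun b e σ := by
      intro σ
      have hins : ⟪ξ, (σ : E3)⟫ / ‖ξ‖ = ⟪(e : E3), (σ : E3)⟫ := by
        rw [hre]; exact inner_smul_div hr e σ
      have hins' : ⟪ξ, (σ : E3)⟫ = ⟪(e : E3), (σ : E3)⟫ * ‖ξ‖ := by
        rwa [div_eq_iff (by rw [← hrξ]; exact hr.ne')] at hins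
      have hp := xiPlus_norm_sq ξ σ
      have hmn := xiMinus_norm_sq ξ σ
      rw [hins'] at hp hmn
      have habs := S2.abs_inner_le e σ
      unfold modInt wfun
      rw [hins, heq', show E * a * (b ⟪(e : E3), (σ : E3)⟫ * (1 - |⟪(e : E3), (σ : E3)⟫|)) =
        b ⟪(e : E3), (σ : E3)⟫ * (E * a * (1 - |⟪(e : E3), (σ : E3)⟫|)) by ring]
      generalize ⟪(e : E3), (σ : E3)⟫ = y at *
      refine mul_le_mul_of_nonneg_left ?_ (hb0 _)
      have hx1 : ‖ξ‖ ^ 2 ≤ 1 := by nlinarith [norm_nonneg ξ]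
      have p1 := norm_nonneg (ψ τ (xiPlus ξ σ))
      have p2 := norm_nonneg (ψ τ (xiMinus ξ σ))
      have q1 := norm_le_one hψ hτ0 (xiPlus ξ σ)
      have q2 := norm_le_one hψ hτ0 (xiMinus ξ σ)
      have b1 := hle (xiPlus ξ σ) (by simpa using (xiPlus_norm_le ξ σ).trans hξ1)
      have b2 := hle (xiMinus ξ σ) (by simpa using (xiMinus_norm_le ξ σ).trans hξ1)
      rw [hp] at b1
      rw [hmn] at b2
      have hprod : ‖ψ τ (xiPlus ξ σ)‖ * ‖ψ τ (xiMinus ξ σ)‖ ≤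
          E * Real.exp (a * (‖ξ‖ ^ 2 * (1 - |y|) / 2)) := by
        rw [hE, ← Real.exp_add]
        rcases le_total 0 y with hy | hy
        · refine (mul_le_of_le_one_right p1 q2).trans (b1.trans ?_)
          rw [Real.exp_le_exp, abs_of_nonneg hy]
          apply le_of_eq; ring
        · refine (mul_le_of_le_one_left p2 q1).trans (b2.trans ?_)
          rw [Real.exp_le_exp, abs_of_nonpos hy]
          apply le_of_eq; ring
      exact caseA_aux hE0 ha ha1 (sq_nonneg _) hx1 (by linarith) (by linarith [abs_nonneg y]) hprod
    have hi := integral_mono (integrable_modInt hb hψ hτ0 ξ) ((hw e).const_mul (E * a)) hpt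
    rw [integral_const_mul, hm e] at hi
    show _ < E * (a * (m + 1))
    have : 0 < E * a := by positivity
    linarith

lemma noncollapse_A (hb : Measurable b) (hb0 : ∀ x, 0 ≤ b x) (hψ : IsBobylevSolution b ψ ψ₀)
    {γ : ℝ} (hγ : 0 < γ) (hbγ : ∀ x, 1 - γ < x → x < 1 → 0 < b x)
    {e₀ : S2} (hw : Integrable (wfun b e₀) sphμ) {ξ₀ : E3} (hξ₀ : ‖ψ₀ ξ₀‖ < 1)
    {t : ℝ} (ht : 0 < t) : ∀ ξ, ξ ≠ 0 → ‖ψ t ξ‖ < 1 := by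
  have dich : ∀ t, 0 < t → (∃ ξ, ξ ≠ 0 ∧ ‖ψ t ξ‖ < 1) → ∀ ξ, ξ ≠ 0 → ‖ψ t ξ‖ < 1 := by
    rintro t ht ⟨η, -, hη⟩ ξ hξ
    refine lt_of_le_of_ne (norm_le_one hψ ht.le ξ) fun h => ?_
    exact hη.ne (dichotomy hb hb0 hψ hγ hbγ ht hξ h η)
  set m := ∫ σ, wfun b e₀ σ ∂sphμ
  have hm0 : 0 ≤ m := 
    integral_nonneg fun σ => mul_nonneg (hb0 _) (by linarith [S2.abs_inner_le e₀ σ])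
  set ε := 1 / (4 * (m + 1)) with hε
  have hε0 : 0 < ε := by positivity
  have hεm : (m + 1) * ε = 1 / 4 := by rw [hε]; field_simp
  have hξ0 : ξ₀ ≠ 0 := by
    rintro rfl
    have := norm_zero' hψ le_rfl
    rw [hψ.init] at this; linarith
  -- small times
  obtain ⟨t0, ht0, hsmall⟩ : ∃ t0, 0 < t0 ∧ ∀ τ, 0 < τ → τ ≤ t0 → ‖ψ τ ξ₀‖ < 1 := by
    have hc : ContinuousWithinAt (fun τ => ψ τ ξ₀) (Ici 0) 0 := (hψ.eq 0 le_rfl ξ₀).continuousWithinAt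
    have h1 := hc.norm.tendsto.eventually (gt_mem_nhds (show ‖ψ 0 ξ₀‖ < 1 by rw [hψ.init]; exact hξ₀))
    obtain ⟨δ, hδ, h2⟩ := Metric.mem_nhdsWithin_iff.1 h1
    refine ⟨δ / 2, by positivity, fun τ h3 h4 => h2 ⟨?_, h3.le⟩⟩
    rw [Metric.mem_ball, Real.dist_eq, sub_zero, abs_of_pos h3]; linarith
  have key : ∀ n : ℕ, ∀ τ, 0 < τ → τ ≤ t0 + n * ε → ∀ ξ, ξ ≠ 0 → ‖ψ τ ξ‖ < 1 := by
    intro n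
    induction n with
    | zero => intro τ h1 h2; exact dich τ h1 ⟨ξ₀, hξ0, hsmall τ h1 (by simpa using h2)⟩
    | succ n ih =>
      intro τ h1 h2
      by_cases h3 : τ ≤ t0 + n * ε
      · exact ih τ h1 h3
      · have hn : 0 < t0 + n * ε := by positivity
        push_cast at h2
        refine dich τ h1 (caseA_step hb hb0 hψ (fun e => (wfun_all hw e).1)
          (fun e => (wfun_all hw e).2) hn.le (not_le.1 h3).le ?_ (ih _ hn le_rfl))
        rw [← hεm]
        gcongr
        linarith
  obtain ⟨n, hn⟩ := exists_nat_gt (t / ε)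
  rw [div_lt_iff₀ hε0] at hn
  exact key n t ht (by linarith)

end sol

end part6

section part7
open scoped Pointwise

section bad
variable {b : ℝ → ℝ} {ψ : ℝ → E3 → ℂ} {ψ₀ : E3 → ℂ}

/-- The defect `p(ξ⁺)p(ξ⁻) - p(ξ)`. -/
def defect (p : E3 → ℝ) (r : ℝ) (e σ : S2) : ℝ :=
  p (xiPlus (r • (e : E3)) σ) * p (xiMinus (r • (e : E3)) σ) - p (r • (e : E3))

/-- Integrability of the defect against the kernel. -/
def DefInt (b : ℝ → ℝ) (p : E3 → ℝ) : Prop :=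
  ∀ r, 0 < r → ∀ e : S2, Integrable (fun σ : S2 => b ⟪(e : E3), (σ : E3)⟫ * |defect p r e σ|) sphμ

/-- `x₀` is a bad value. -/
def BadVal (b : ℝ → ℝ) (x₀ : ℝ) : Prop :=
  ∀ e σ : S2, ⟪(e : E3), (σ : E3)⟫ = x₀ → ¬ IntegrableAtFilter (wfun b e) (𝓝 σ) sphμ

lemma meas_wfun (hb : Measurable b) (e : S2) : Measurable (wfun b e) := by
  unfold wfun
  have h1 : Measurable fun σ : S2 => ⟪(e : E3), (σ : E3)⟫ := Continuous.measurable (by fun_prop)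
  have h2 : Measurable fun σ : S2 => 1 - |⟪(e : E3), (σ : E3)⟫| := Continuous.measurable (by fun_prop)
  exact (hb.comp h1).mul h2

lemma exists_bad {e₀ : S2} (h : ¬ Integrable (wfun b e₀) sphμ) :
    ∃ x₀, -1 ≤ x₀ ∧ x₀ ≤ 1 ∧ BadVal b x₀ := by
  have h1 : ∃ σ₀, ¬ IntegrableAtFilter (wfun b e₀) (𝓝 σ₀) sphμ := by
    by_contra hcon
    push Not at hcon
    have h2 : LocallyIntegrable (wfun b e₀) sphμ := hcon
    have h3 := h2.integrableOn_isCompact isCompact_univ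
    rw [integrableOn_univ] at h3
    exact h h3
  obtain ⟨σ₀, hσ₀⟩ := h1
  have h4 := abs_le.1 (S2.abs_inner_le e₀ σ₀)
  refine ⟨⟪(e₀ : E3), (σ₀ : E3)⟫, h4.1, h4.2, fun e σ heq hintg => hσ₀ ?_⟩
  obtain ⟨R, hR1, hR2⟩ := exists_iso (e₀ : E3) σ₀ e σ (by simp [S2.norm]) (by simp [S2.norm]) heq.symm
  have hσ : sphMap R σ₀ = σ := Subtype.ext (by rw [sphMap_coe, hR2])
  have h5 := sphMap_integrableAt R (wfun b e) σ₀ (by rw [hσ]; exact hintg)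
  have h6 : (fun σ => wfun b e (sphMap R σ)) = wfun b e₀ := by
    funext τ
    unfold wfun
    rw [sphMap_coe, ← hR1, LinearIsometryEquiv.inner_map_map]
  rwa [h6] at h5

lemma not_lower (hb : Measurable b) (hb0 : ∀ x, 0 ≤ b x) {e σ₀ : S2}
    (bad : ¬ IntegrableAtFilter (wfun b e) (𝓝 σ₀) sphμ) {G : S2 → ℝ}
    (hG : Integrable (fun σ : S2 => b ⟪(e : E3), (σ : E3)⟫ * G σ) sphμ) {c : ℝ} (hc : 0 < c)
    (h : ∀ᶠ σ : S2 in 𝓝 σ₀, c * (1 - |⟪(e : E3), (σ : E3)⟫|) ≤ G σ) : False := by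
  apply bad
  obtain ⟨s, hs1, hs2, hs3⟩ := _root_.mem_nhds_iff.1 h
  refine ⟨s, hs2.mem_nhds hs3, ?_⟩
  have hsm : MeasurableSet s := hs2.measurableSet
  refine Integrable.mono ((hG.const_mul c⁻¹).integrableOn (s := s))
    (meas_wfun hb e).aestronglyMeasurable ?_
  filter_upwards [ae_restrict_mem hsm] with σ hσ
  have h1 : c * (1 - |⟪(e : E3), (σ : E3)⟫|) ≤ G σ := hs1 hσ
  have h2 := S2.abs_inner_le e σ
  have h3 := hb0 ⟪(e : E3), (σ : E3)⟫
  have hw0 : 0 ≤ wfun b e σ := mul_nonneg h3 (by linarith)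
  rw [Real.norm_of_nonneg hw0]
  refine le_trans ?_ (le_abs_self _)
  unfold wfun
  rw [show b ⟪(e : E3), (σ : E3)⟫ * (1 - |⟪(e : E3), (σ : E3)⟫|) = c⁻¹ * (b ⟪(e : E3), (σ : E3)⟫ *
    (c * (1 - |⟪(e : E3), (σ : E3)⟫|))) by field_simp]
  gcongr

lemma defInt_sol (hb : Measurable b) (hb0 : ∀ x, 0 ≤ b x) (hψ : IsBobylevSolution b ψ ψ₀)
    {t : ℝ} (ht : 0 ≤ t) : DefInt b (fun ξ => ‖ψ t ξ‖ ^ 2) := by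
  intro r hr e
  have hc := sol_cont hψ ht
  refine ((integrable_modInt hb hψ ht (r • (e : E3))).const_mul 2).mono ?_ (ae_of_all _ fun σ => ?_)
  · have h1 : Measurable fun σ : S2 => ⟪(e : E3), (σ : E3)⟫ := Continuous.measurable (by fun_prop)
    have hp := continuous_xiPlus (r • (e : E3))
    have hm := continuous_xiMinus (r • (e : E3))
    refine ((hb.comp h1).mul (Continuous.measurable ?_)).aestronglyMeasurable
    unfold defect
    fun_prop
  · simp only [modInt, defect]
    rw [inner_smul_div hr e σ]
    have p1 := norm_nonneg (ψ t (xiPlus (r • (e : E3)) σ))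
    have p2 := norm_nonneg (ψ t (xiMinus (r • (e : E3)) σ))
    have p3 := norm_nonneg (ψ t (r • (e : E3)))
    have q1 := norm_le_one hψ ht (xiPlus (r • (e : E3)) σ)
    have q2 := norm_le_one hψ ht (xiMinus (r • (e : E3)) σ)
    have q3 := norm_le_one hψ ht (r • (e : E3))
    generalize ‖ψ t (xiPlus (r • (e : E3)) σ)‖ = A at *
    generalize ‖ψ t (xiMinus (r • (e : E3)) σ)‖ = B at *
    generalize ‖ψ t (r • (e : E3))‖ = D at *
    have h3 := hb0 ⟪(e : E3), (σ : E3)⟫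
    generalize b ⟪(e : E3), (σ : E3)⟫ = w at *
    simp only [norm_mul, Real.norm_eq_abs, abs_abs, abs_of_nonneg h3]
    rw [show A ^ 2 * B ^ 2 - D ^ 2 = (A * B - D) * (A * B + D) by ring, abs_mul,
      abs_of_nonneg (show 0 ≤ A * B + D by positivity), abs_of_pos (zero_lt_two' ℝ)]
    have hAB : A * B ≤ 1 := mul_le_one₀ q1 p2 q2
    have := abs_nonneg (A * B - D)
    have h4 : |A * B - D| * (A * B + D) ≤ |A * B - D| * 2 := by gcongr; linarith
    nlinarith


end bad

section middle

lemma propagate {c s : ℝ} (hc0 : 0 < c) (hc1 : c < 1) (hs0 : 0 < s) (hs1 : s < 1) (Q : ℝ → Prop)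
    {k0 : ℝ} (hk0 : 0 < k0) (h0 : ∀ r, 0 < r → r ≤ k0 → Q r)
    (hstep : ∀ r, 0 < r → Q (c * r) → Q (s * r) → Q r) : ∀ r, 0 < r → Q r := by
  set q := max c s
  have hq0 : 0 < q := lt_max_of_lt_left hc0
  have hq1 : q < 1 := max_lt hc1 hs1
  have key : ∀ n : ℕ, ∀ r, 0 < r → q ^ n * r ≤ k0 → Q r := by
    intro n
    induction n with
    | zero => intro r h1 h2; exact h0 r h1 (by simpa using h2)
    | succ n ih =>
      intro r h1 h2
      have hqn : 0 < q ^ n := by positivity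
      refine hstep r h1 (ih _ (by positivity) ?_) (ih _ (by positivity) ?_)
      · refine le_trans ?_ h2
        rw [pow_succ, mul_assoc]
        gcongr
        exact le_max_left _ _
      · refine le_trans ?_ h2
        rw [pow_succ, mul_assoc]
        gcongr
        exact le_max_right _ _
  intro r hr
  obtain ⟨n, hn⟩ := exists_pow_lt_of_lt_one (div_pos hk0 hr) hq1
  exact key n r hr ((lt_div_iff₀ hr).1 hn).le

lemma gauss_of_mul {P : ℝ → ℝ} {c s l : ℝ} (hc0 : 0 < c) (hc1 : c < 1) (hs0 : 0 < s)
    (hs1 : s < 1) (hcs : c ^ 2 + s ^ 2 = 1) (hmul : ∀ r, 0 < r → P r = P (c * r) * P (s * r))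
    (hcont : Tendsto P (𝓝[>] 0) (𝓝 1))
    (hl : Tendsto (fun k => (1 - P k) / k ^ 2) (𝓝[>] 0) (𝓝 l)) :
    ∀ r, 0 < r → P r = Real.exp (-(l * r ^ 2)) := by
  have hev : ∀ {Q : ℝ → Prop}, (∀ᶠ r in 𝓝[>] (0:ℝ), Q r) → ∃ k0, 0 < k0 ∧ ∀ r, 0 < r → r ≤ k0 → Q r := by
    intro Q h
    obtain ⟨u, hu, h2⟩ := mem_nhdsGT_iff_exists_Ioc_subset.1 h
    exact ⟨u, hu, fun r h3 h4 => h2 ⟨h3, h4⟩⟩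
  have hposE := hcont.eventually (lt_mem_nhds (show (0:ℝ) < 1 by norm_num))
  have hpos : ∀ r, 0 < r → 0 < P r := by
    obtain ⟨k0, hk0, h0⟩ := hev hposE
    refine propagate hc0 hc1 hs0 hs1 _ hk0 h0 fun r hr h1 h2 => ?_
    rw [hmul r hr]; positivity
  have hlog : Tendsto (fun k => Real.log (P k) / k ^ 2) (𝓝[>] 0) (𝓝 (-l)) := by
    have h1 : Tendsto (fun k => -((1 - P k) / k ^ 2) / P k) (𝓝[>] 0) (𝓝 (-l / 1)) :=
      hl.neg.div hcont one_ne_zero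
    rw [div_one] at h1
    refine tendsto_of_tendsto_of_tendsto_of_le_of_le' h1 hl.neg ?_ ?_
    · filter_upwards [self_mem_nhdsWithin] with k hk
      have hk' : (0:ℝ) < k := hk
      have hp := hpos k hk
      have := Real.one_sub_inv_le_log_of_pos hp
      rw [show -((1 - P k) / k ^ 2) / P k = (1 - (P k)⁻¹) / k ^ 2 by field_simp; ring]
      gcongr
    · filter_upwards [self_mem_nhdsWithin] with k hk
      have hk' : (0:ℝ) < k := hk
      have hp := hpos k hk
      have := Real.log_le_sub_one_of_pos hp
      rw [show -((1 - P k) / k ^ 2) = (P k - 1) / k ^ 2 by ring]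
      gcongr
  intro r hr
  have main : ∀ ε, 0 < ε → ∀ r, 0 < r → |Real.log (P r) + l * r ^ 2| ≤ ε * r ^ 2 := by
    intro ε hε
    have h1 := (Metric.tendsto_nhds.1 hlog ε hε)
    obtain ⟨k0, hk0, h0⟩ := hev h1
    refine propagate hc0 hc1 hs0 hs1 _ hk0 ?_ ?_
    · intro r hr hrk
      have h2 := h0 r hr hrk
      rw [Real.dist_eq] at h2
      rw [show Real.log (P r) + l * r ^ 2 = (Real.log (P r) / r ^ 2 - -l) * r ^ 2 by field_simp; ring,
        abs_mul, abs_of_pos (show 0 < r ^ 2 by positivity)]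
      gcongr
    · intro r hr h1 h2
      rw [hmul r hr, Real.log_mul (hpos _ (by positivity)).ne' (hpos _ (by positivity)).ne']
      rw [show Real.log (P (c * r)) + Real.log (P (s * r)) + l * r ^ 2 =
        (Real.log (P (c * r)) + l * (c * r) ^ 2) + (Real.log (P (s * r)) + l * (s * r) ^ 2) by
          linear_combination (-(l * r ^ 2)) * hcs]
      refine (abs_add_le _ _).trans ((add_le_add h1 h2).trans (le_of_eq ?_))
      linear_combination (ε * r ^ 2) * hcs
  have h3 : Real.log (P r) + l * r ^ 2 = 0 := by
    by_contra hne
    have h4 := main (|Real.log (P r) + l * r ^ 2| / (2 * r ^ 2)) (by positivity) r hr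
    have h5 : |Real.log (P r) + l * r ^ 2| / (2 * r ^ 2) * r ^ 2 = |Real.log (P r) + l * r ^ 2| / 2 := by
      field_simp
    rw [h5] at h4
    have := abs_pos.2 hne
    linarith
  rw [← Real.exp_log (hpos r hr)]
  congr 1
  linarith

end middle

end part7

section part8
open scoped Pointwise

section middle2
variable {b : ℝ → ℝ} {p : E3 → ℝ}

lemma continuous_defect (hp : Continuous p) (r : ℝ) (e : S2) : Continuous (defect p r e) := by
  have h1 := continuous_xiPlus (r • (e : E3))
  have h2 := continuous_xiMinus (r • (e : E3))
  unfold defect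
  fun_prop

lemma mid_eq (hb : Measurable b) (hb0 : ∀ x, 0 ≤ b x) (hp : Continuous p) (hD : DefInt b p) {x₀ : ℝ}
    (bad : BadVal b x₀) {r : ℝ} (hr : 0 < r) {e σ : S2}
    (h : ⟪(e : E3), (σ : E3)⟫ = x₀) : defect p r e σ = 0 := by
  by_contra hne
  have h1 := abs_pos.2 hne
  have h2 : ∀ᶠ τ in 𝓝 σ, |defect p r e σ| / 2 < |defect p r e τ| :=
    (continuous_defect hp r e).abs.continuousAt.eventually (lt_mem_nhds (by linarith))
  refine not_lower hb hb0 (bad e σ h) (hD r hr e) (half_pos h1) ?_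
  filter_upwards [h2] with τ hτ
  have := abs_nonneg ⟪(e : E3), (τ : E3)⟫
  nlinarith

lemma gauss_of_radial (h0 : p 0 = 1) (hrad : ∀ r : ℝ, 0 < r → ∀ e e' : S2, p (r • (e : E3)) = p (r • (e' : E3)))
    {l : ℝ} {e : S2} (h : ∀ r : ℝ, 0 < r → p (r • (e : E3)) = Real.exp (-(l * r ^ 2))) (ξ : E3) :
    p ξ = Real.exp (-(l * ‖ξ‖ ^ 2)) := by
  by_cases hξ : ξ = 0
  · subst hξ; simp [h0]
  · obtain ⟨r, e', hr, hrξ, hre⟩ := exists_polar ξ hξ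
    rw [← hrξ, hre, hrad r hr e' e, h r hr]

lemma smul_norm {r : ℝ} (hr : 0 < r) (e : S2) : ‖r • (e : E3)‖ = r := by
  rw [norm_smul, S2.norm, mul_one, Real.norm_of_nonneg hr.le]

lemma mid_swap (hpd : PD p) {r : ℝ} (hr : 0 < r) {e σ : S2} (h1 : defect p r e σ = 0)
    (h2 : defect p r σ e = 0) : p (r • (e : E3)) = p (r • (σ : E3)) := by
  unfold defect at h1 h2
  have e1 : xiPlus (r • (σ : E3)) e = xiPlus (r • (e : E3)) σ := by
    unfold xiPlus; rw [smul_norm hr, smul_norm hr]; module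
  have e2 : xiMinus (r • (σ : E3)) e = -xiMinus (r • (e : E3)) σ := by
    unfold xiMinus; rw [smul_norm hr, smul_norm hr]; module
  rw [e1, e2, hpd.neg] at h2
  linarith

lemma exists_sphere_point (v : E3) (hv : ‖v‖ = 1) : ∃ σ : S2, (σ : E3) = v :=
  ⟨⟨v, by simpa using hv⟩, rfl⟩

lemma exists_common {x₀ : ℝ} (e e' : S2) (h : 2 * x₀ ^ 2 - 1 < ⟪(e : E3), (e' : E3)⟫) (h1 : -1 < ⟪(e : E3), (e' : E3)⟫) :
    ∃ σ : S2, ⟪(e : E3), (σ : E3)⟫ = x₀ ∧ ⟪(e' : E3), (σ : E3)⟫ = x₀ := by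
  obtain ⟨n, hn1, hn2⟩ := exists_orth (e : E3) (e' : E3)
  set y := ⟪(e : E3), (e' : E3)⟫ with hy
  have hy1 : 0 < 1 + y := by linarith
  set k := x₀ / (1 + y) with hk
  have hk1 : k * (1 + y) = x₀ := div_mul_cancel₀ _ hy1.ne'
  have hk2 : 2 * k * x₀ ≤ 1 := by
    have : 2 * k * x₀ * (1 + y) ≤ 1 * (1 + y) := by
      rw [show 2 * k * x₀ * (1 + y) = 2 * (k * (1 + y)) * x₀ by ring, hk1]; nlinarith
    exact le_of_mul_le_mul_right this hy1
  set d := √(1 - 2 * k * x₀)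
  have hd : d ^ 2 = 1 - 2 * k * x₀ := Real.sq_sqrt (by linarith)
  have hee := S2.inner_self e
  have hee' := S2.inner_self e'
  have hnn := S2.inner_self n
  have hn1' : ⟪(e : E3), (n : E3)⟫ = 0 := by rw [real_inner_comm]; exact hn1
  have hn2' : ⟪(e' : E3), (n : E3)⟫ = 0 := by rw [real_inner_comm]; exact hn2
  have hy' : ⟪(e' : E3), (e : E3)⟫ = y := by rw [real_inner_comm]
  obtain ⟨σ, hσ⟩ := exists_sphere_point (k • ((e : E3) + e') + d • (n : E3)) (by
    have : ‖k • ((e : E3) + e') + d • (n : E3)‖ ^ 2 = 1 := by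
      rw [← real_inner_self_eq_norm_sq]
      simp only [inner_add_left, inner_add_right, real_inner_smul_left, real_inner_smul_right,
        hee, hee', hnn, hn1, hn2, hn1', hn2', hy', ← hy]
      linear_combination hd + 2 * k * hk1
    nlinarith [norm_nonneg (k • ((e : E3) + e') + d • (n : E3))])
  refine ⟨σ, ?_, ?_⟩
  · rw [hσ]
    simp only [inner_add_right, real_inner_smul_right, hee, hn1', ← hy]
    linear_combination hk1
  · rw [hσ]
    simp only [inner_add_right, real_inner_smul_right, hee', hn2', hy']
    linear_combination hk1

lemma tendsto_ray (hp : Continuous p) (h0 : p 0 = 1) (e : E3) :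
    Tendsto (fun k : ℝ => p (k • e)) (𝓝[>] 0) (𝓝 1) := by
  have : Continuous fun k : ℝ => p (k • e) := by fun_prop
  have h1 := this.tendsto 0
  simp only [zero_smul, h0] at h1
  exact h1.mono_left nhdsWithin_le_nhds

lemma middle_gauss (hb : Measurable b) (hb0 : ∀ x, 0 ≤ b x) (hpd : PD p) {C : ℝ}
    (hC : ∀ ξ, 1 - p ξ ≤ C * ‖ξ‖ ^ 2) (hD : DefInt b p) {x₀ : ℝ} (hx1 : -1 < x₀) (hx2 : x₀ < 1)
    (bad : BadVal b x₀) : ∃ l : ℝ, ∀ ξ, p ξ = Real.exp (-(l * ‖ξ‖ ^ 2)) := by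
  have hp := hpd.continuous
  have heq := fun {r : ℝ} (hr : 0 < r) {e σ : S2} (h : ⟪(e : E3), (σ : E3)⟫ = x₀) =>
    mid_eq hb hb0 hp hD bad hr h
  have hswap : ∀ r : ℝ, 0 < r → ∀ e σ : S2, ⟪(e : E3), (σ : E3)⟫ = x₀ → p (r • (e : E3)) = p (r • (σ : E3)) :=
    fun r hr e σ h => mid_swap hpd hr (heq hr h) (heq hr (by rw [real_inner_comm]; exact h))
  have hx2' : x₀ ^ 2 < 1 := by nlinarith
  have hrad : ∀ r : ℝ, 0 < r → ∀ e e' : S2, p (r • (e : E3)) = p (r • (e' : E3)) := by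
    intro r hr e e'
    refine (sphere_chain (fun e' => p (r • (e : E3)) = p (r • (e' : E3)))
      (γ := max (2 * x₀ ^ 2 - 1) 0) (max_lt (by linarith) one_pos) ?_ e e' rfl)
    intro u v huv hu
    obtain ⟨σ, h1, h2⟩ := exists_common u v ((le_max_left _ _).trans_lt huv)
      (by linarith [(le_max_right (2 * x₀ ^ 2 - 1) 0).trans_lt huv])
    rw [hu, hswap r hr u σ h1, hswap r hr v σ h2]
  obtain ⟨e, -, -⟩ := exists_orth 0 0
  obtain ⟨σ, hσ, -⟩ := exists_common (x₀ := x₀) e e (by rw [S2.inner_self]; linarith) (by rw [S2.inner_self]; linarith)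
  obtain ⟨l, hl⟩ := hpd.exists_limit hC (e : E3)
  set c := √((1 + x₀) / 2)
  set s := √((1 - x₀) / 2)
  have hc2 : c ^ 2 = (1 + x₀) / 2 := Real.sq_sqrt (by linarith)
  have hs2 : s ^ 2 = (1 - x₀) / 2 := Real.sq_sqrt (by linarith)
  have hc0 : 0 < c := Real.sqrt_pos.2 (by linarith)
  have hs0 : 0 < s := Real.sqrt_pos.2 (by linarith)
  have hc1 : c < 1 := by nlinarith
  have hs1 : s < 1 := by nlinarith
  have radv : ∀ v : E3, v ≠ 0 → p v = p (‖v‖ • (e : E3)) := by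
    intro v hv
    obtain ⟨r, e', hr, hrξ, hre⟩ := exists_polar v hv
    rw [← hrξ, hrad r hr e e', ← hre]
  refine ⟨l, gauss_of_radial hpd.zero hrad (e := e) ?_⟩
  refine gauss_of_mul hc0 hc1 hs0 hs1 (by rw [hc2, hs2]; ring) ?_ (tendsto_ray hp hpd.zero _) hl
  intro r hr
  have h1 := heq hr hσ
  unfold defect at h1
  have hn := smul_norm hr e
  have a1 : ‖xiPlus (r • (e : E3)) σ‖ = c * r := by
    rw [← sq_eq_sq₀ (norm_nonneg _) (by positivity), xiPlus_norm_sq, hn, real_inner_smul_left, hσ,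
      mul_pow, hc2]; ring
  have a2 : ‖xiMinus (r • (e : E3)) σ‖ = s * r := by
    rw [← sq_eq_sq₀ (norm_nonneg _) (by positivity), xiMinus_norm_sq, hn, real_inner_smul_left, hσ,
      mul_pow, hs2]; ring
  rw [radv (xiPlus (r • (e : E3)) σ) (norm_pos_iff.1 (by rw [a1]; positivity)),
    radv (xiMinus (r • (e : E3)) σ) (norm_pos_iff.1 (by rw [a2]; positivity)), a1, a2] at h1
  linarith

end middle2

end part8

section part9
open scoped Pointwise

section endpt
variable {b : ℝ → ℝ} {p : E3 → ℝ}

lemma decomp3 {e n1 n2 : S2} (h1 : ⟪(e : E3), (n1 : E3)⟫ = 0) (h2 : ⟪(e : E3), (n2 : E3)⟫ = 0)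
    (h3 : ⟪(n1 : E3), (n2 : E3)⟫ = 0) (v : E3) :
    v = ⟪(e : E3), v⟫ • (e : E3) + ⟪(n1 : E3), v⟫ • (n1 : E3) + ⟪(n2 : E3), v⟫ • (n2 : E3) := by
  have hon : Orthonormal ℝ (![(e : E3), n1, n2]) := by
    rw [orthonormal_iff_ite]
    intro i j
    fin_cases i <;> fin_cases j <;>
      simp [h1, h2, h3, real_inner_comm (e : E3), real_inner_comm (n1 : E3) (n2 : E3)]
  have card : Fintype.card (Fin 3) = Module.finrank ℝ E3 := by simp
  have hsp := (basisOfOrthonormalOfCardEqFinrank hon card).span_eq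
  rw [coe_basisOfOrthonormalOfCardEqFinrank] at hsp
  set B := OrthonormalBasis.mk hon hsp.ge
  have := B.sum_repr' v
  rw [Fin.sum_univ_three] at this
  simp only [B, OrthonormalBasis.coe_mk] at this
  simpa using this.symm

lemma defect_bound (hpd : PD p) (hp0 : ∀ ξ, 0 ≤ p ξ) {C : ℝ} (hC : ∀ ξ, 1 - p ξ ≤ C * ‖ξ‖ ^ 2)
    (ξ v : E3) : |p (ξ - v) - p ξ| - C * ‖v‖ ^ 2 ≤ |p (ξ - v) * p v - p ξ| := by
  have h1 := hpd.le_one (ξ - v)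
  have h2 := hp0 (ξ - v)
  have h3 := hC v
  have h4 := hpd.le_one v
  have h5 : p (ξ - v) - p ξ = (p (ξ - v) * p v - p ξ) + p (ξ - v) * (1 - p v) := by ring
  rw [h5]
  have h6 := abs_add_le (p (ξ - v) * p v - p ξ) (p (ξ - v) * (1 - p v))
  rw [abs_of_nonneg (show 0 ≤ p (ξ - v) * (1 - p v) from mul_nonneg h2 (by linarith))] at h6
  have h7 : p (ξ - v) * (1 - p v) ≤ 1 * (1 - p v) := by gcongr
  linarith

lemma tang_aux (hpd : PD p) (hp0 : ∀ ξ, 0 ≤ p ξ) {C : ℝ} (hC : ∀ ξ, 1 - p ξ ≤ C * ‖ξ‖ ^ 2)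
    {r : ℝ} (hr : 0 < r) {e n1 n2 : S2} (h1 : ⟪(e : E3), (n1 : E3)⟫ = 0) (h2 : ⟪(e : E3), (n2 : E3)⟫ = 0)
    (h3 : ⟪(n1 : E3), (n2 : E3)⟫ = 0) {A : E3 →L[ℝ] ℝ} {ξ : E3} (hA : HasFDerivAt p A ξ)
    (hA2 : A n2 = 0) (hA1 : A n1 ≠ 0) {R : E3 ≃ₗᵢ[ℝ] E3} (hR1 : R n1 = n2) (hR2 : R n2 = n1)
    (hRe : R e = e) :
    ∀ᶠ v in 𝓝 (0 : E3), ⟪(e : E3), v⟫ = ‖v‖ ^ 2 / r →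
      |A n1| / 2 * ‖v‖ ≤ |p (ξ - v) * p v - p ξ| + |p (ξ - R v) * p (R v) - p ξ| := by
  have ha := abs_pos.2 hA1
  set a := |A n1|
  have hC0 : 0 ≤ C := by
    have := hC n1
    rw [S2.norm] at this
    have := hpd.le_one n1
    linarith
  set K := a / r + 2 * |A e| / r + 2 * C with hK
  have hK0 : 0 < K := by positivity
  have hsm : ∀ᶠ v in 𝓝 (0 : E3), |p (ξ - v) - p ξ + A v| ≤ a / 8 * ‖v‖ := by
    have t1 : Tendsto (fun v : E3 => ξ - v) (𝓝 0) (𝓝 ξ) := by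
      have : Continuous fun v : E3 => ξ - v := by fun_prop
      simpa using this.tendsto 0
    have t2 := t1.eventually (hA.isLittleO.bound (show 0 < a / 8 by positivity))
    filter_upwards [t2] with v hv
    simpa using hv
  have hR0 : Tendsto R (𝓝 (0:E3)) (𝓝 0) := by
    have := R.continuous.tendsto 0
    rwa [map_zero] at this
  have hnm : ∀ᶠ v in 𝓝 (0 : E3), ‖v‖ < a / (4 * K) := by
    have := (continuous_norm (E := E3)).tendsto 0
    rw [norm_zero] at this
    exact this.eventually (gt_mem_nhds (by positivity))
  filter_upwards [hsm, hR0.eventually hsm, hnm] with v g1 g2 g3 hev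
  have hnR : ‖R v‖ = ‖v‖ := R.norm_map v
  have d1 := defect_bound hpd hp0 hC ξ v
  have d2 := defect_bound hpd hp0 hC ξ (R v)
  rw [hnR] at d2 g2
  have i1 : ⟪(e : E3), R v⟫ = ⟪(e : E3), v⟫ := by
    conv_lhs => rw [← hRe]
    exact R.inner_map_map _ _
  have i2 : ⟪(n1 : E3), R v⟫ = ⟪(n2 : E3), v⟫ := by
    conv_lhs => rw [← hR2]
    exact R.inner_map_map _ _
  have Av : A v = ⟪(e : E3), v⟫ * A e + ⟪(n1 : E3), v⟫ * A n1 := by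
    conv_lhs => rw [decomp3 h1 h2 h3 v]
    simp [hA2]
  have ARv : A (R v) = ⟪(e : E3), v⟫ * A e + ⟪(n2 : E3), v⟫ * A n1 := by
    conv_lhs => rw [decomp3 h1 h2 h3 (R v)]
    simp [hA2, i1, i2]
  have tri : ‖v‖ ≤ |⟪(e : E3), v⟫| + |⟪(n1 : E3), v⟫| + |⟪(n2 : E3), v⟫| := by
    conv_lhs => rw [decomp3 h1 h2 h3 v]
    refine (norm_add₃_le).trans (le_of_eq ?_)
    simp [norm_smul]
  have l1 : |⟪(n1 : E3), v⟫| * a - |⟪(e : E3), v⟫| * |A e| ≤ |A v| := by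
    rw [Av]
    have := abs_sub_abs_le_abs_sub (⟪(n1 : E3), v⟫ * A n1) (-(⟪(e : E3), v⟫ * A e))
    rw [abs_neg, abs_mul, abs_mul] at this
    refine this.trans (le_of_eq ?_)
    congr 1; ring
  have l2 : |⟪(n2 : E3), v⟫| * a - |⟪(e : E3), v⟫| * |A e| ≤ |A (R v)| := by
    rw [ARv]
    have := abs_sub_abs_le_abs_sub (⟪(n2 : E3), v⟫ * A n1) (-(⟪(e : E3), v⟫ * A e))
    rw [abs_neg, abs_mul, abs_mul] at this
    refine this.trans (le_of_eq ?_)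
    congr 1; ring
  have k1 : |A v| - a / 8 * ‖v‖ ≤ |p (ξ - v) - p ξ| := by
    have := abs_sub_abs_le_abs_sub (A v) (-(p (ξ - v) - p ξ))
    rw [abs_neg, show A v - -(p (ξ - v) - p ξ) = p (ξ - v) - p ξ + A v by ring] at this
    linarith
  have k2 : |A (R v)| - a / 8 * ‖v‖ ≤ |p (ξ - R v) - p ξ| := by
    have := abs_sub_abs_le_abs_sub (A (R v)) (-(p (ξ - R v) - p ξ))
    rw [abs_neg, show A (R v) - -(p (ξ - R v) - p ξ) = p (ξ - R v) - p ξ + A (R v) by ring] at this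
    linarith
  have hee : |⟪(e : E3), v⟫| = ‖v‖ ^ 2 / r := by rw [hev, abs_of_nonneg (by positivity)]
  rw [hee] at l1 l2 tri
  have fin1 : K * ‖v‖ ^ 2 ≤ a / 4 * ‖v‖ := by
    have : K * ‖v‖ ≤ a / 4 := by
      rw [lt_div_iff₀ (by positivity)] at g3; linarith
    have := mul_le_mul_of_nonneg_right this (norm_nonneg v)
    linarith
  have fin2 : K * ‖v‖ ^ 2 = a * (‖v‖ ^ 2 / r) + 2 * (‖v‖ ^ 2 / r * |A e|) + 2 * (C * ‖v‖ ^ 2) := by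
    rw [hK]; ring
  have tri' := mul_le_mul_of_nonneg_left tri ha.le
  linarith

lemma xiMinus_smul {r : ℝ} (hr : 0 < r) (e σ : S2) :
    xiMinus (r • (e : E3)) σ = (r / 2) • ((e : E3) - σ) := by
  unfold xiMinus; rw [smul_norm hr]; module

lemma defect_eq (r : ℝ) (e σ : S2) : defect p r e σ =
    p (r • (e : E3) - xiMinus (r • (e : E3)) σ) * p (xiMinus (r • (e : E3)) σ) - p (r • (e : E3)) := by
  unfold defect
  congr 3
  unfold xiPlus xiMinus; module

lemma xiMinus_sq' {r : ℝ} (hr : 0 < r) (e σ : S2) :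
    ‖xiMinus (r • (e : E3)) σ‖ ^ 2 = r ^ 2 * (1 - ⟪(e : E3), (σ : E3)⟫) / 2 := by
  rw [xiMinus_norm_sq, smul_norm hr, real_inner_smul_left]; ring

lemma xiPlus_sq' {r : ℝ} (hr : 0 < r) (e σ : S2) :
    ‖xiPlus (r • (e : E3)) σ‖ ^ 2 = r ^ 2 * (1 + ⟪(e : E3), (σ : E3)⟫) / 2 := by
  rw [xiPlus_norm_sq, smul_norm hr, real_inner_smul_left]; ring

lemma xiMinus_tendsto {r : ℝ} (hr : 0 < r) (e : S2) :
    Tendsto (xiMinus (r • (e : E3))) (𝓝 e) (𝓝 0) := by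
  have := (continuous_xiMinus (r • (e : E3))).tendsto e
  rwa [xiMinus_smul hr, sub_self, smul_zero] at this

lemma tang_zero (hb : Measurable b) (hb0 : ∀ x, 0 ≤ b x) (hpd : PD p) (hp0 : ∀ ξ, 0 ≤ p ξ) {C : ℝ}
    (hC : ∀ ξ, 1 - p ξ ≤ C * ‖ξ‖ ^ 2) (hD : DefInt b p) (bad : BadVal b 1)
    {r : ℝ} (hr : 0 < r) {e n : S2} (hen : ⟪(e : E3), (n : E3)⟫ = 0) :
    fderiv ℝ p (r • (e : E3)) n = 0 := by
  have hA := ((hpd.differentiable hC) (r • (e : E3))).hasFDerivAt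
  set A := fderiv ℝ p (r • (e : E3))
  by_contra hne
  obtain ⟨n2, hn2, hn2'⟩ := exists_orth (e : E3) ((InnerProductSpace.toDual ℝ E3).symm A)
  have hA2 : A n2 = 0 := by
    rw [← InnerProductSpace.toDual_symm_apply (𝕜 := ℝ), real_inner_comm]; exact hn2'
  obtain ⟨n1, hn1, hn12⟩ := exists_orth (e : E3) (n2 : E3)
  have h1 : ⟪(e : E3), (n1 : E3)⟫ = 0 := by rw [real_inner_comm]; exact hn1
  have h2 : ⟪(e : E3), (n2 : E3)⟫ = 0 := by rw [real_inner_comm]; exact hn2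
  have hA1 : A n1 ≠ 0 := by
    intro h
    apply hne
    rw [decomp3 h1 h2 hn12 (n : E3), hen]
    simp [hA2, h]
  obtain ⟨R, hR1, hR2, hR3⟩ := exists_refl (n1 : E3) n2 (by rw [S2.norm, S2.norm])
  have hRe : R e = e := hR3 e (by rw [h1, h2])
  have hev := (xiMinus_tendsto hr e).eventually (tang_aux hpd hp0 hC hr h1 h2 hn12 hA hA2 hA1 hR1 hR2 hRe)
  have hinv : ∀ σ : S2, ⟪(e : E3), R (σ : E3)⟫ = ⟪(e : E3), (σ : E3)⟫ := by
    intro σ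
    conv_lhs => rw [← hRe]
    exact R.inner_map_map _ _
  have hRm : ∀ σ : S2, xiMinus (r • (e : E3)) (sphMap R σ) = R (xiMinus (r • (e : E3)) σ) := by
    intro σ
    rw [xiMinus_smul hr, xiMinus_smul hr, sphMap_coe, map_smul, map_sub, hRe]
  have ha := abs_pos.2 hA1
  have hI := hD r hr e
  have hI2 := (sphMap_integrable R _).2 hI
  simp only [sphMap_coe, hinv] at hI2
  have hI3 := hI.add hI2
  have hnm : ∀ᶠ σ in 𝓝 e, ‖xiMinus (r • (e : E3)) σ‖ < 1 := by
    have := (xiMinus_tendsto hr e).norm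
    rw [norm_zero] at this
    exact this.eventually (gt_mem_nhds one_pos)
  refine not_lower hb hb0 (bad e e (S2.inner_self e))
    (G := fun σ => |defect p r e σ| + |defect p r e (sphMap R σ)|) ?_
    (c := |A n1| * r ^ 2 / 4) (by positivity) ?_
  · refine hI3.congr (ae_of_all _ fun σ => ?_)
    simp only [Pi.add_apply]; ring
  · filter_upwards [hev, hnm] with σ h3 h4
    have hsq := xiMinus_sq' hr e σ
    have h5 := h3 (by
      rw [hsq, xiMinus_smul hr, real_inner_smul_right, inner_sub_right, S2.inner_self]
      field_simp)
    rw [defect_eq, defect_eq, hRm]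
    refine le_trans ?_ h5
    have h6 : ‖xiMinus (r • (e : E3)) σ‖ ^ 2 ≤ ‖xiMinus (r • (e : E3)) σ‖ := by
      nlinarith [norm_nonneg (xiMinus (r • (e : E3)) σ)]
    rw [hsq] at h6
    have h7 : 1 - |⟪(e : E3), (σ : E3)⟫| ≤ 1 - ⟪(e : E3), (σ : E3)⟫ := by
      linarith [le_abs_self ⟪(e : E3), (σ : E3)⟫]
    calc |A n1| * r ^ 2 / 4 * (1 - |⟪(e : E3), (σ : E3)⟫|) ≤
        |A n1| * r ^ 2 / 4 * (1 - ⟪(e : E3), (σ : E3)⟫) := by gcongr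
      _ = |A n1| / 2 * (r ^ 2 * (1 - ⟪(e : E3), (σ : E3)⟫) / 2) := by ring
      _ ≤ _ := by gcongr

lemma radial_of_tang (hdiff : Differentiable ℝ p)
    (ht : ∀ r : ℝ, 0 < r → ∀ e n : S2, ⟪(e : E3), (n : E3)⟫ = 0 → fderiv ℝ p (r • (e : E3)) n = 0) :
    ∀ r : ℝ, 0 < r → ∀ e e' : S2, p (r • (e : E3)) = p (r • (e' : E3)) := by
  intro r hr e e'
  refine (sphere_chain (fun e' => p (r • (e : E3)) = p (r • (e' : E3))) (γ := 0) one_pos ?_ e e' rfl)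
  intro u v huv hu
  rw [hu]
  set y := ⟪(u : E3), (v : E3)⟫ with hy
  have hy1 : |y| ≤ 1 := S2.abs_inner_le u v
  have huu := S2.inner_self u
  have hvv := S2.inner_self v
  have hvu : ⟪(v : E3), (u : E3)⟫ = y := by rw [real_inner_comm]
  set w := (v : E3) - y • (u : E3) with hw
  have hw2 : ‖w‖ ^ 2 = 1 - y ^ 2 := by
    rw [← real_inner_self_eq_norm_sq, hw]
    simp only [inner_sub_left, inner_sub_right, real_inner_smul_left, real_inner_smul_right, huu, hvv,
      hvu, ← hy]
    ring
  by_cases hw0 : w = 0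
  · rw [hw0] at hw2
    have hy11 : y = 1 := by simp at hw2; nlinarith
    rw [hw, hy11, one_smul, sub_eq_zero] at hw0
    rw [hw0]
  · have hwn : 0 < ‖w‖ := norm_pos_iff.2 hw0
    obtain ⟨n, hn⟩ := exists_sphere_point (‖w‖⁻¹ • w) (by
      rw [norm_smul, norm_inv, norm_norm, inv_mul_cancel₀ hwn.ne'])
    have hun : ⟪(u : E3), (n : E3)⟫ = 0 := by
      rw [hn, real_inner_smul_right, hw, inner_sub_right, real_inner_smul_right, huu, ← hy]; ring
    have hnu : ⟪(n : E3), (u : E3)⟫ = 0 := by rw [real_inner_comm]; exact hun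
    have hnn := S2.inner_self n
    have hcos := Real.cos_arccos (abs_le.1 hy1).1 (abs_le.1 hy1).2
    have hsin : Real.sin (Real.arccos y) = ‖w‖ := by
      rw [Real.sin_arccos, ← hw2, Real.sqrt_sq hwn.le]
    set g : ℝ → E3 := fun θ => r • (Real.cos θ • (u : E3) + Real.sin θ • (n : E3)) with hg
    have hgd : ∀ θ, HasDerivAt g (r • (-Real.sin θ • (u : E3) + Real.cos θ • (n : E3))) θ := fun θ =>
      (((Real.hasDerivAt_cos θ).smul_const _).add ((Real.hasDerivAt_sin θ).smul_const _)).const_smul r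
    have hfd : ∀ θ, HasDerivAt (fun θ => p (g θ)) 0 θ := by
      intro θ
      have h1 := ((hdiff (g θ)).hasFDerivAt).comp_hasDerivAt θ (hgd θ)
      have hcs := Real.sin_sq_add_cos_sq θ
      obtain ⟨e1, he1⟩ := exists_sphere_point (Real.cos θ • (u : E3) + Real.sin θ • (n : E3)) (by
        have : ‖Real.cos θ • (u : E3) + Real.sin θ • (n : E3)‖ ^ 2 = 1 := by
          rw [← real_inner_self_eq_norm_sq]
          simp only [inner_add_left, inner_add_right, real_inner_smul_left, real_inner_smul_right,
            huu, hnn, hun, hnu]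
          linear_combination hcs
        nlinarith [norm_nonneg (Real.cos θ • (u : E3) + Real.sin θ • (n : E3))])
      obtain ⟨e2, he2⟩ := exists_sphere_point (-Real.sin θ • (u : E3) + Real.cos θ • (n : E3)) (by
        have : ‖-Real.sin θ • (u : E3) + Real.cos θ • (n : E3)‖ ^ 2 = 1 := by
          rw [← real_inner_self_eq_norm_sq]
          simp only [inner_add_left, inner_add_right, real_inner_smul_left, real_inner_smul_right,
            huu, hnn, hun, hnu]
          linear_combination hcs
        nlinarith [norm_nonneg (-Real.sin θ • (u : E3) + Real.cos θ • (n : E3))])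
      have h2 := ht r hr e1 e2 (by
        rw [he1, he2]
        simp only [inner_add_left, inner_add_right, real_inner_smul_left, real_inner_smul_right,
            huu, hnn, hun, hnu]
        ring)
      rw [map_smul, ← he2, show g θ = r • (e1 : E3) by rw [hg, he1], h2, smul_zero] at h1
      exact h1
    have hconst := is_const_of_deriv_eq_zero (fun θ => (hfd θ).differentiableAt)
      (fun θ => (hfd θ).deriv) 0 (Real.arccos y)
    simp only [hg, Real.cos_zero, Real.sin_zero, one_smul, zero_smul, add_zero, hcos, hsin] at hconst
    rw [hconst, hn, smul_smul, mul_inv_cancel₀ hwn.ne', one_smul, hw]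
    congr 2
    abel

end endpt

end part9

section part10
open scoped Pointwise

section endpt2
variable {b : ℝ → ℝ} {p : E3 → ℝ}

lemma end_ode (hb : Measurable b) (hb0 : ∀ x, 0 ≤ b x) (hD : DefInt b p) (bad : BadVal b 1)
    (h0 : p 0 = 1) (e : S2) (hradv : ∀ v : E3, p v = p (‖v‖ • (e : E3))) {P : ℝ → ℝ}
    (hP : P = fun k : ℝ => p (k • (e : E3))) (hPd : Differentiable ℝ P) {l : ℝ}
    (hl : Tendsto (fun k => (1 - P k) / k ^ 2) (𝓝[>] 0) (𝓝 l)) {r : ℝ} (hr : 0 < r) :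
    deriv P r = -(2 * l * r * P r) := by
  have hP0 : P 0 = 1 := by rw [hP]; simp [h0]
  set h : ℝ → ℝ := fun y => P (r * √(1 - y)) * P (r * √y) with hh
  have hh0 : h 0 = P r := by simp [hh, hP0]
  set d := deriv P r * (r * (-1 / 2)) * P (r * √0) + P (r * √(1 - 0)) * (-(l * r ^ 2)) with hd
  have hd1 : HasDerivAt (fun y : ℝ => P (r * √(1 - y))) (deriv P r * (r * (-1 / 2))) 0 := by
    have a1 : HasDerivAt (fun y : ℝ => 1 - y) (-1) 0 := by
      simpa using (hasDerivAt_id (0:ℝ)).const_sub 1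
    have a2 := (a1.sqrt (by norm_num)).const_mul r
    have a3 : HasDerivAt P (deriv P r) (r * √(1 - 0)) := by
      simpa using (hPd r).hasDerivAt
    have a4 := a3.comp (0:ℝ) a2
    refine HasDerivAt.congr_deriv a4 ?_
    norm_num
  have hd2 : HasDerivWithinAt (fun y : ℝ => P (r * √y)) (-(l * r ^ 2)) (Ioi 0) 0 := by
    rw [hasDerivWithinAt_iff_tendsto_slope' (by simp)]
    have t1 : Tendsto (fun y : ℝ => r * √y) (𝓝[>] 0) (𝓝[>] 0) := by
      refine tendsto_nhdsWithin_iff.2 ⟨?_, ?_⟩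
      · have : Continuous fun y : ℝ => r * √y := by fun_prop
        have t := this.tendsto 0
        simp only [Real.sqrt_zero, mul_zero] at t
        exact t.mono_left nhdsWithin_le_nhds
      · filter_upwards [self_mem_nhdsWithin] with y hy
        have : 0 < √y := Real.sqrt_pos.2 hy
        exact mul_pos hr this
    have t2 := ((hl.comp t1).mul_const (r ^ 2)).neg
    refine t2.congr' ?_
    filter_upwards [self_mem_nhdsWithin] with y hy
    have hy' : (0:ℝ) < y := hy
    simp only [Function.comp, slope_def_field, Real.sqrt_zero, mul_zero, hP0, sub_zero]
    rw [mul_pow, Real.sq_sqrt hy'.le]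
    field_simp
    ring
  have hd3 : HasDerivWithinAt h d (Ioi 0) 0 := hd1.hasDerivWithinAt.mul hd2
  have hdz : d = 0 := by
    by_contra hne
    have ha := abs_pos.2 hne
    rw [hasDerivWithinAt_iff_tendsto_slope' (by simp)] at hd3
    have ev := hd3.abs.eventually (lt_mem_nhds (show |d| / 2 < |d| by linarith))
    rw [eventually_nhdsWithin_iff] at ev
    have tσ : Tendsto (fun σ : S2 => (1 - ⟪(e : E3), (σ : E3)⟫) / 2) (𝓝 e) (𝓝 0) := by
      have : Continuous fun σ : S2 => (1 - ⟪(e : E3), (σ : E3)⟫) / 2 := by fun_prop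
      have t := this.tendsto e
      simp only [S2.inner_self, sub_self, zero_div] at t
      exact t
    refine not_lower hb hb0 (bad e e (S2.inner_self e)) (hD r hr e) (c := |d| / 4) (by positivity) ?_
    filter_upwards [tσ.eventually ev] with σ hσ
    have hx := S2.abs_inner_le e σ
    have hx' := le_abs_self ⟪(e : E3), (σ : E3)⟫
    have hdef : defect p r e σ = h ((1 - ⟪(e : E3), (σ : E3)⟫) / 2) - h 0 := by
      have a1 : ‖xiPlus (r • (e : E3)) σ‖ = r * √(1 - (1 - ⟪(e : E3), (σ : E3)⟫) / 2) := by
        rw [← sq_eq_sq₀ (norm_nonneg _) (by positivity), xiPlus_sq' hr, mul_pow,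
          Real.sq_sqrt (by linarith [(abs_le.1 hx).1])]
        ring
      have a2 : ‖xiMinus (r • (e : E3)) σ‖ = r * √((1 - ⟪(e : E3), (σ : E3)⟫) / 2) := by
        rw [← sq_eq_sq₀ (norm_nonneg _) (by positivity), xiMinus_sq' hr, mul_pow,
          Real.sq_sqrt (by linarith)]
        ring
      unfold defect
      rw [hradv (xiPlus (r • (e : E3)) σ), hradv (xiMinus (r • (e : E3)) σ), a1, a2, hh0, hh, hP]
    rw [hdef]
    rcases (show 0 ≤ (1 - ⟪(e : E3), (σ : E3)⟫) / 2 by linarith).eq_or_lt with hy | hy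
    · have : ⟪(e : E3), (σ : E3)⟫ = 1 := by linarith
      rw [this]; simp
    · have h5 := hσ hy
      rw [slope_def_field, sub_zero, abs_div, abs_of_pos hy, lt_div_iff₀ hy] at h5
      refine le_trans ?_ h5.le
      calc |d| / 4 * (1 - |⟪(e : E3), (σ : E3)⟫|) ≤ |d| / 4 * (1 - ⟪(e : E3), (σ : E3)⟫) := by gcongr
        _ = _ := by ring
  rw [hd] at hdz
  simp only [Real.sqrt_zero, mul_zero, hP0, sub_zero, Real.sqrt_one, mul_one] at hdz
  have : r * (deriv P r + 2 * l * r * P r) = 0 := by linear_combination (-2) * hdz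
  rcases mul_eq_zero.1 this with h | h
  · exact absurd h hr.ne'
  · linarith

lemma end_gauss (hb : Measurable b) (hb0 : ∀ x, 0 ≤ b x) (hpd : PD p) (hp0 : ∀ ξ, 0 ≤ p ξ) {C : ℝ}
    (hC : ∀ ξ, 1 - p ξ ≤ C * ‖ξ‖ ^ 2) (hD : DefInt b p) (bad : BadVal b 1) :
    ∃ l : ℝ, ∀ ξ, p ξ = Real.exp (-(l * ‖ξ‖ ^ 2)) := by
  have hdiff := hpd.differentiable hC
  have hrad := radial_of_tang hdiff (fun r hr e n hen => tang_zero hb hb0 hpd hp0 hC hD bad hr hen)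
  obtain ⟨e, -, -⟩ := exists_orth 0 0
  obtain ⟨l, hl⟩ := hpd.exists_limit hC (e : E3)
  have hradv : ∀ v : E3, p v = p (‖v‖ • (e : E3)) := by
    intro v
    by_cases hv : v = 0
    · subst hv; simp
    · obtain ⟨r, e', hr, hrξ, hre⟩ := exists_polar v hv
      rw [← hrξ, hrad r hr e e', ← hre]
  obtain ⟨P, hP⟩ : ∃ P : ℝ → ℝ, P = fun k : ℝ => p (k • (e : E3)) := ⟨_, rfl⟩
  have hPd : Differentiable ℝ P := by
    rw [hP]
    exact hdiff.comp (by fun_prop : Differentiable ℝ fun k : ℝ => k • (e : E3))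
  have hl' : Tendsto (fun k => (1 - P k) / k ^ 2) (𝓝[>] 0) (𝓝 l) := by rw [hP]; exact hl
  have hP0 : P 0 = 1 := by rw [hP]; simp [hpd.zero]
  have hP1 : ∀ k, P k ≤ 1 := fun k => by rw [hP]; exact hpd.le_one _
  have hode : ∀ r, 0 ≤ r → deriv P r = -(2 * l * r * P r) := by
    intro r hr
    rcases hr.eq_or_lt with h | h
    · subst h
      have hmax : IsLocalMax P 0 := Eventually.of_forall fun k => by rw [hP0]; exact hP1 k
      rw [hmax.deriv_eq_zero]; ring
    · exact end_ode hb hb0 hD bad hpd.zero e hradv hP hPd hl' h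
  refine ⟨l, gauss_of_radial hpd.zero hrad (e := e) fun r hr => ?_⟩
  have hg : ∀ k : ℝ, HasDerivAt (fun k => P k * Real.exp (l * k ^ 2))
      (deriv P k * Real.exp (l * k ^ 2) + P k * (Real.exp (l * k ^ 2) * (l * (2 * k)))) k := by
    intro k
    have a1 : HasDerivAt (fun k : ℝ => l * k ^ 2) (l * (2 * k)) k := by
      simpa using (hasDerivAt_pow 2 k).const_mul l
    exact (hPd k).hasDerivAt.mul a1.exp
  have hconst := constant_of_has_deriv_right_zero (f := fun k => P k * Real.exp (l * k ^ 2))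
    (a := 0) (b := r) (fun k _ => (hg k).continuousAt.continuousWithinAt) (fun k hk => by
      have h1 := hg k
      rw [hode k hk.1] at h1
      convert h1.hasDerivWithinAt using 1
      ring) r ⟨hr.le, le_rfl⟩
  simp only [hP0] at hconst
  have h2 : P r = Real.exp (-(l * r ^ 2)) := by
    rw [Real.exp_neg]
    refine eq_inv_of_mul_eq_one_left ?_
    rw [hconst]
    simp
  rw [← h2, hP]

lemma bad_gauss (hb : Measurable b) (hb0 : ∀ x, 0 ≤ b x) (hpd : PD p) (hp0 : ∀ ξ, 0 ≤ p ξ) {C : ℝ}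
    (hC : ∀ ξ, 1 - p ξ ≤ C * ‖ξ‖ ^ 2) (hD : DefInt b p) {x₀ : ℝ} (hx1 : -1 ≤ x₀) (hx2 : x₀ ≤ 1)
    (bad : BadVal b x₀) : ∃ l : ℝ, ∀ ξ, p ξ = Real.exp (-(l * ‖ξ‖ ^ 2)) := by
  rcases hx2.eq_or_lt with h | h
  · subst h; exact end_gauss hb hb0 hpd hp0 hC hD bad
  rcases hx1.eq_or_lt with h' | h'
  · subst h'
    refine end_gauss (b := fun x => b (-x)) (hb.comp measurable_neg) (fun x => hb0 _) hpd hp0 hC ?_ ?_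
    · intro r hr e
      have := hD r hr (-e)
      refine this.congr (ae_of_all _ fun σ => ?_)
      have e1 : xiPlus (r • ((-e : S2) : E3)) σ = -xiMinus (r • (e : E3)) σ := by
        unfold xiPlus xiMinus; rw [smul_norm hr, smul_norm hr, coe_neg_sphere]; module
      have e2 : xiMinus (r • ((-e : S2) : E3)) σ = -xiPlus (r • (e : E3)) σ := by
        unfold xiPlus xiMinus; rw [smul_norm hr, smul_norm hr, coe_neg_sphere]; module
      simp only [defect]
      rw [e1, e2]
      simp only [hpd.neg, coe_neg_sphere, inner_neg_left, smul_neg]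
      rw [mul_comm (p (xiMinus _ _))]
    · intro e σ heσ
      have := bad (-e) σ (by rw [coe_neg_sphere, inner_neg_left, heσ])
      have hw : wfun b (-e) = wfun (fun x => b (-x)) e := by
        funext τ
        simp only [wfun, coe_neg_sphere, inner_neg_left, abs_neg]
      rwa [hw] at this
  · exact middle_gauss hb hb0 hpd hC hD h' h bad

end endpt2

section final
variable {b : ℝ → ℝ} {ψ : ℝ → E3 → ℂ} {ψ₀ : E3 → ℂ}

lemma noncollapse_B (hb : Measurable b) (hb0 : ∀ x, 0 ≤ b x) (hψ : IsBobylevSolution b ψ ψ₀)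
    (hψK : ∀ t ≥ 0, KBdd 2 (ψ t))
    {γ : ℝ} (hγ : 0 < γ) (hbγ : ∀ x, 1 - γ < x → x < 1 → 0 < b x)
    {e₀ : S2} (hw : ¬ Integrable (wfun b e₀) sphμ) {ξ₀ : E3} (hξ₀ : ‖ψ₀ ξ₀‖ < 1)
    {t : ℝ} (ht : 0 < t) : ∀ ξ, ξ ≠ 0 → ‖ψ t ξ‖ < 1 := by
  obtain ⟨x₀, hx1, hx2, bad⟩ := exists_bad hw
  have hgauss : ∀ τ, 0 ≤ τ → ∃ l : ℝ, ∀ ξ, ‖ψ τ ξ‖ ^ 2 = Real.exp (-(l * ‖ξ‖ ^ 2)) := by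
    intro τ hτ
    obtain ⟨C, hC⟩ := kbdd_one_sub (hψ.isCharFn τ hτ) (hψK τ hτ)
    exact bad_gauss hb hb0 (pd_of_isCharFn (hψ.isCharFn τ hτ)) (fun ξ => by positivity) hC
      (defInt_sol hb hb0 hψ hτ) hx1 hx2 bad
  have hmod : ∀ τ, 0 ≤ τ → ∀ ξ σ, modInt b ψ τ ξ σ = 0 := by
    intro τ hτ ξ σ
    obtain ⟨l, hl⟩ := hgauss τ hτ
    have : ‖ψ τ (xiPlus ξ σ)‖ * ‖ψ τ (xiMinus ξ σ)‖ = ‖ψ τ ξ‖ := by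
      rw [← sq_eq_sq₀ (by positivity) (norm_nonneg _), mul_pow, hl, hl, hl, ← Real.exp_add,
        ← xi_norm_add ξ σ]
      congr 1; ring
    unfold modInt
    rw [this, sub_self, mul_zero]
  have hanti : AntitoneOn (fun τ => ‖ψ τ ξ₀‖ ^ 2) (Ici 0) := by
    have hintg : interior (Ici (0:ℝ)) = Ioi 0 := interior_Ici
    have hder : ∀ τ, 0 < τ → ∃ d ≤ 0, HasDerivAt (fun τ => ‖ψ τ ξ₀‖ ^ 2) d τ := by
      intro τ hτ
      obtain ⟨d, hd1, hd2⟩ := normsq_deriv_left hb hb0 hψ hτ ξ₀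
      simp only [hmod τ hτ.le, integral_zero, mul_zero] at hd1
      exact ⟨d, hd1, hd2⟩
    refine antitoneOn_of_deriv_nonpos (convex_Ici 0) ?_ ?_ ?_
    · intro τ hτ
      obtain ⟨d, -, hd⟩ := normsq_deriv hb hb0 hψ hτ ξ₀
      exact hd.continuousWithinAt
    · intro τ hτ
      rw [hintg] at hτ
      obtain ⟨d, -, hd⟩ := hder τ hτ
      exact hd.differentiableAt.differentiableWithinAt
    · intro τ hτ
      rw [hintg] at hτ
      obtain ⟨d, hd0, hd⟩ := hder τ hτ
      rw [hd.deriv]; exact hd0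
  have hlt : ‖ψ t ξ₀‖ < 1 := by
    have h1 := hanti (Set.mem_Ici.2 le_rfl) ht.le ht.le
    simp only [hψ.init] at h1
    have h2 := norm_nonneg (ψ₀ ξ₀)
    have h3 := norm_nonneg (ψ t ξ₀)
    nlinarith
  intro ξ hξ
  refine lt_of_le_of_ne (norm_le_one hψ ht.le ξ) fun h => ?_
  exact hlt.ne (dichotomy hb hb0 hψ hγ hbγ ht hξ h ξ₀)

lemma main_thm
    (s K : ℝ) (hs0 : 0 < s) (hs1 : s < 1) (hK : 0 < K)
    (b : ℝ → ℝ) (hb_meas : Measurable b) (hb_nonneg : ∀ x, 0 ≤ b x)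
    (hb_sing : KernelSingular b s K)
    (F₀ : Measure E3) [IsProbabilityMeasure F₀]
    (hnotdirac : ∀ v₀ : E3, F₀ {v₀} ≠ 1)
    (ψ₀ : E3 → ℂ) (hψ₀ : ψ₀ = charFn F₀)
    (ψ : ℝ → E3 → ℂ) (hψ : IsBobylevSolution b ψ ψ₀)
    (hψK : ∀ t ≥ 0, KBdd 2 (ψ t)) (hψcont : KContinuous 2 ψ) :
    ∀ t > (0:ℝ), ∀ N : ℕ,
      (∫⁻ ξ : E3, ENNReal.ofReal ((1 + ‖ξ‖ ^ 2) ^ N * ‖ψ t ξ‖ ^ 2)) < ⊤ := by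
  intro t ht N
  obtain ⟨γ, hγ, hγ1, cb, hcb, hbγ⟩ := b_lower hs0 hK hb_sing
  have hbpos : ∀ x, 1 - γ < x → x < 1 → 0 < b x := fun x h1 h2 => by
    have h3 : 0 < 1 - x := by linarith
    exact lt_of_lt_of_le (by positivity) (hbγ x h1 h2)
  obtain ⟨ξ₀, hξ₀⟩ : ∃ ξ₀, ‖ψ₀ ξ₀‖ < 1 := by
    by_contra hcon
    push Not at hcon
    obtain ⟨v, hv⟩ := dirac_of_norm_one F₀ (fun ξ => le_antisymm
      (norm_le_one_of_isCharFn ⟨F₀, inferInstance, rfl⟩ ξ) (by rw [← hψ₀]; exact hcon ξ))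
    exact hnotdirac v hv
  obtain ⟨e₀, -, -⟩ := exists_orth 0 0
  have hlt : ∀ ξ, ξ ≠ 0 → ‖ψ t ξ‖ < 1 := by
    by_cases hw : Integrable (wfun b e₀) sphμ
    · exact noncollapse_A hb_meas hb_nonneg hψ hγ hbpos hw hξ₀ ht
    · exact noncollapse_B hb_meas hb_nonneg hψ hψK hγ hbpos hw hξ₀ ht
  obtain ⟨t0, ht0, ht0t, c, hc, hnd⟩ := unif_nondeg hψ hψK hψcont ht hlt
  obtain ⟨δ, hδ0, hδ1, hδ⟩ := smoothing hs0 hs1 hb_meas hb_nonneg hψ hγ hcb hbγ ht0.le ht0t hc hnd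
    (M := (N:ℝ) + 2) (by positivity)
  exact final_integral hδ0 hδ1 N hδ

end final

end part10

/-- global-in-time H^∞ smoothing for non-Dirac initial data with
finite second moment. -/
theorem villani_smoothing_global_energy
    (s K : ℝ) (hs0 : 0 < s) (hs1 : s < 1) (hK : 0 < K)
    (b : ℝ → ℝ) (hb_meas : Measurable b) (hb_nonneg : ∀ x, 0 ≤ b x)
    (hb_sing : KernelSingular b s K)
    (F₀ : Measure E3) [IsProbabilityMeasure F₀]
    (hnotdirac : ∀ v₀ : E3, F₀ {v₀} ≠ 1)
    (hmom2 : (∫⁻ v, ENNReal.ofReal (‖v‖ ^ 2) ∂F₀) < ⊤)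
    (ψ₀ : E3 → ℂ) (hψ₀ : ψ₀ = charFn F₀)
    (ψ : ℝ → E3 → ℂ) (hψ : IsBobylevSolution b ψ ψ₀)
    (hψK : ∀ t ≥ 0, KBdd 2 (ψ t)) (hψcont : KContinuous 2 ψ) :
    ∀ t > (0:ℝ), ∀ N : ℕ,
      (∫⁻ ξ : E3, ENNReal.ofReal ((1 + ‖ξ‖ ^ 2) ^ N * ‖ψ t ξ‖ ^ 2)) < ⊤ := by
  exact main_thm s K hs0 hs1 hK b hb_meas hb_nonneg hb_sing F₀ hnotdirac ψ₀ hψ₀ ψ hψ hψK hψcont
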